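/- arXiv:0910.2055 — 8 statements merged into one kernel-verified Lean document; each statement's English description precedes it below -/
import Mathlib

section
/- Let V be a finite-dimensional real inner product space, Υ a lattice in V such that √2·Υ is even and unimodular, M, N a polarization of Υ, and k ≥ 1 an integer. Then the lattice L(M,N,k) ⊆ V^k is integral for the product inner product, and its sublattice L_M is an even lattice. -/
noncomputable section

open scoped RealInnerProductSpace Pointwise
open Module

variable {V : Type*} [NormedAddCommGroup V] [InnerProductSpace ℝ V]

/-- `L` is a (full) lattice in `V`: a finitely generated `ℤ`-submodule spanning `V` over `ℝ`. -/
def IsLat (L : Submodule ℤ V) : Prop :=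
  L.FG ∧ Submodule.span ℝ (L : Set V) = ⊤

/-- The lattice `L` is integral: all inner products of lattice vectors are integers. -/
def IsIntegralLat (L : Submodule ℤ V) : Prop :=
  ∀ x ∈ L, ∀ y ∈ L, ∃ n : ℤ, ⟪x, y⟫ = (n : ℝ)

/-- The lattice `L` is even: it is integral and all norms are even integers. -/
def IsEvenLat (L : Submodule ℤ V) : Prop :=
  IsIntegralLat L ∧ ∀ x ∈ L, ∃ n : ℤ, ⟪x, x⟫ = 2 * (n : ℝ)

/-- The lattice `L` is unimodular: the Gram matrix of some `ℤ`-basis has determinant 1. -/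
def IsUnimodularLat (L : Submodule ℤ V) : Prop :=
  ∃ (n : ℕ) (b : Basis (Fin n) ℤ L),
    (Matrix.of fun i j : Fin n => ⟪(b i : V), (b j : V)⟫).det = 1

/-- The minimum norm `μ(L)` of a lattice. -/
def minNorm (L : Submodule ℤ V) : ℝ :=
  sInf {r : ℝ | ∃ x ∈ L, x ≠ 0 ∧ ⟪x, x⟫ = r}

/-- `√2·Υ` is an even unimodular lattice: all norms of `Υ` are integers, all doubled inner
products are integers, and the Gram matrix of the form `2⟪·,·⟫` on a `ℤ`-basis of `Υ` has
determinant 1. -/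
def SqrtTwoEvenUnimod (Υ : Submodule ℤ V) : Prop :=
  (∀ x ∈ Υ, ∃ n : ℤ, ⟪x, x⟫ = (n : ℝ)) ∧
  (∀ x ∈ Υ, ∀ y ∈ Υ, ∃ n : ℤ, 2 * ⟪x, y⟫ = (n : ℝ)) ∧
  ∃ (n : ℕ) (b : Basis (Fin n) ℤ Υ),
    (Matrix.of fun i j : Fin n => 2 * ⟪(b i : V), (b j : V)⟫).det = 1

/-- `M, N` is a polarization of `Υ`: a pair of integral sublattices with
`M + N = Υ` and `M ∩ N = 2Υ`. -/
def IsPolarization (Υ M N : Submodule ℤ V) : Prop :=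
  M ≤ Υ ∧ N ≤ Υ ∧ IsIntegralLat M ∧ IsIntegralLat N ∧ M ⊔ N = Υ ∧ M ⊓ N = (2 : ℤ) • Υ

/-- The sublattice `L_M = {(x_1,…,x_k) ∈ M^k : x_1+⋯+x_k ∈ M ∩ N}` of `V^k`. -/
def LsubM (M N : Submodule ℤ V) (k : ℕ) : Submodule ℤ (PiLp 2 fun _ : Fin k => V) where
  carrier := {v | (∀ i, v i ∈ M) ∧ (∑ i, v i) ∈ M ⊓ N}
  add_mem' := fun {a b} ha hb =>
    ⟨fun i => M.add_mem (ha.1 i) (hb.1 i), by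
      have h : (∑ i, (a + b) i) = (∑ i, a i) + ∑ i, b i :=
        (Finset.sum_congr rfl fun i _ => rfl).trans Finset.sum_add_distrib
      rw [h]; exact (M ⊓ N).add_mem ha.2 hb.2⟩
  zero_mem' := ⟨fun _ => M.zero_mem, by
      have h : (∑ i : Fin k, (0 : PiLp 2 fun _ : Fin k => V) i) = 0 :=
        Finset.sum_eq_zero fun _ _ => rfl
      rw [h]; exact (M ⊓ N).zero_mem⟩
  smul_mem' := fun c a ha =>
    ⟨fun i => M.smul_mem c (ha.1 i), by
      have h : (∑ i, (c • a) i) = c • ∑ i, a i := by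
        show (∑ i, c • a i) = c • ∑ i, a i
        exact Finset.smul_sum.symm
      rw [h]; exact (M ⊓ N).smul_mem c ha.2⟩

/-- The diagonal sublattice `L^N = {(y,…,y) : y ∈ N}` of `V^k`. -/
def LsupN (N : Submodule ℤ V) (k : ℕ) : Submodule ℤ (PiLp 2 fun _ : Fin k => V) where
  carrier := {v | ∃ y ∈ N, ∀ i, v i = y}
  add_mem' := fun {a b} ha hb => by
    obtain ⟨ya, hya, ha⟩ := ha
    obtain ⟨yb, hyb, hb⟩ := hb
    exact ⟨ya + yb, N.add_mem hya hyb, fun i => by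
      show a i + b i = ya + yb
      rw [ha i, hb i]⟩
  zero_mem' := ⟨0, N.zero_mem, fun _ => rfl⟩
  smul_mem' := fun c a ha => by
    obtain ⟨y, hy, h⟩ := ha
    exact ⟨c • y, N.smul_mem c hy, fun i => by
      show c • a i = c • y
      rw [h i]⟩

/-- The lattice `L(M,N,k) = L_M + L^N ⊆ V^k`. -/
def LMN (M N : Submodule ℤ V) (k : ℕ) : Submodule ℤ (PiLp 2 fun _ : Fin k => V) :=
  LsubM M N k ⊔ LsupN N k

/-- The Leech polarization setup: `V` is 24-dimensional, `√2·Υ` is even unimodular with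
minimum norm 4, and `M, N` is a polarization of `Υ` by two copies of the Leech lattice. -/
def LeechSetup (Υ M N : Submodule ℤ V) : Prop :=
  Module.finrank ℝ V = 24 ∧ IsLat Υ ∧ SqrtTwoEvenUnimod Υ ∧
  (∀ v ∈ Υ, v ≠ 0 → 4 ≤ 2 * ⟪v, v⟫) ∧
  IsPolarization Υ M N ∧
  IsLat M ∧ IsEvenLat M ∧ IsUnimodularLat M ∧ minNorm M = 4 ∧
  IsLat N ∧ IsEvenLat N ∧ IsUnimodularLat N ∧ minNorm N = 4

/-- `(w,x,y,z) ∈ N × M × M × M` is admissible if `x + y + z ∈ M ∩ N`. -/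
def Admissible (M N : Submodule ℤ V) (w x y z : V) : Prop :=
  w ∈ N ∧ x ∈ M ∧ y ∈ M ∧ z ∈ M ∧ x + y + z ∈ M ⊓ N

/-- An offender is an admissible quadruple all three of whose associated vectors
`w+x, w+y, w+z` have norm 2. -/
def Offender (M N : Submodule ℤ V) (w x y z : V) : Prop :=
  Admissible M N w x y z ∧
  ⟪w + x, w + x⟫ = 2 ∧ ⟪w + y, w + y⟫ = 2 ∧ ⟪w + z, w + z⟫ = 2

/-- A super offender is an offender with `⟪w,w⟫ = 4` whose multiset of norms
`{⟪x,x⟫, ⟪y,y⟫, ⟪z,z⟫}` equals `{6,6,4}`. -/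
def SuperOffender (M N : Submodule ℤ V) (w x y z : V) : Prop :=
  Offender M N w x y z ∧ ⟪w, w⟫ = 4 ∧
  ({⟪x, x⟫, ⟪y, y⟫, ⟪z, z⟫} : Multiset ℝ) = ({6, 6, 4} : Multiset ℝ)

lemma aux_sum_int {ι : Type*} (s : Finset ι) (f : ι → ℝ)
    (h : ∀ i ∈ s, ∃ n : ℤ, f i = (n : ℝ)) : ∃ n : ℤ, ∑ i ∈ s, f i = (n : ℝ) := by
  choose! g hg using h
  exact ⟨∑ i ∈ s, g i, by push_cast; exact Finset.sum_congr rfl hg⟩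

lemma aux_norm_sum {M : Submodule ℤ V} (hM : IsIntegralLat M) {ι : Type*} (s : Finset ι)
    (x : ι → V) (hx : ∀ i, x i ∈ M) :
    ∃ n : ℤ, ∑ i ∈ s, ⟪x i, x i⟫ = ⟪∑ i ∈ s, x i, ∑ i ∈ s, x i⟫ + 2 * (n : ℝ) := by
  classical
  induction s using Finset.induction_on with
  | empty => exact ⟨0, by simp⟩
  | insert a s ha ih =>
    obtain ⟨n, hn⟩ := ih
    obtain ⟨m, hm⟩ := hM (x a) (hx a) (∑ i ∈ s, x i) (M.sum_mem fun i _ => hx i)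
    refine ⟨n - m, ?_⟩
    rw [Finset.sum_insert ha, Finset.sum_insert ha, real_inner_add_add_self, hn, hm]
    push_cast
    ring

lemma aux_two {Υ M N : Submodule ℤ V} (hpol : IsPolarization Υ M N) {x : V}
    (hx : x ∈ M ⊓ N) : ∃ u ∈ Υ, x = (2 : ℝ) • u := by
  rw [hpol.2.2.2.2.2] at hx
  obtain ⟨u, hu, rfl⟩ := (Submodule.mem_smul_pointwise_iff_exists _ _ _).1 hx
  exact ⟨u, hu, by rw [two_smul, two_smul]⟩

lemma aux_mixed {Υ M N : Submodule ℤ V} (hΥ : SqrtTwoEvenUnimod Υ)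
    (hpol : IsPolarization Υ M N) (k : ℕ) (a b : PiLp 2 fun _ : Fin k => V)
    (ha : a ∈ LsubM M N k) (hb : b ∈ LsupN N k) : ∃ n : ℤ, ⟪a, b⟫ = (n : ℝ) := by
  obtain ⟨y, hy, hb⟩ := hb
  obtain ⟨u, hu, hau⟩ := aux_two hpol ha.2
  obtain ⟨n, hn⟩ := hΥ.2.1 u hu y (hpol.2.1 hy)
  refine ⟨n, ?_⟩
  rw [PiLp.inner_apply]
  simp only [hb]
  rw [← sum_inner, hau, real_inner_smul_left, hn]

/-- `L(M,N,k)` is integral for the product inner product of `V^k`,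
and its sublattice `L_M` is even. -/
theorem statement0 (Υ M N : Submodule ℤ V) (hΥlat : IsLat Υ)
    (hΥ : SqrtTwoEvenUnimod Υ) (hpol : IsPolarization Υ M N) (k : ℕ) (hk : 1 ≤ k) :
    IsIntegralLat (LMN M N k) ∧ IsEvenLat (LsubM M N k) := by
  have hM := hpol.2.2.1
  have hN := hpol.2.2.2.1
  have hMM : IsIntegralLat (LsubM M N k) := by
    intro a ha b hb
    rw [PiLp.inner_apply]
    exact aux_sum_int _ _ fun i _ => hM _ (ha.1 i) _ (hb.1 i)
  refine ⟨?_, hMM, ?_⟩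
  · intro v hv w hw
    obtain ⟨a, ha, b, hb, rfl⟩ := Submodule.mem_sup.1 hv
    obtain ⟨c, hc, d, hd, rfl⟩ := Submodule.mem_sup.1 hw
    obtain ⟨n1, h1⟩ := hMM a ha c hc
    obtain ⟨n2, h2⟩ := aux_mixed hΥ hpol k a d ha hd
    obtain ⟨n3, h3⟩ := aux_mixed hΥ hpol k c b hc hb
    have h4 : ∃ n : ℤ, ⟪b, d⟫ = (n : ℝ) := by
      obtain ⟨y, hy, hb⟩ := hb
      obtain ⟨z, hz, hd⟩ := hd
      rw [PiLp.inner_apply]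
      refine aux_sum_int _ _ fun i _ => ?_
      rw [hb, hd]
      exact hN y hy z hz
    obtain ⟨n4, h4⟩ := h4
    refine ⟨n1 + n2 + n3 + n4, ?_⟩
    rw [inner_add_left, inner_add_right, inner_add_right, h1, h2, real_inner_comm, h3, h4]
    push_cast
    ring
  · intro a ha
    obtain ⟨n, hn⟩ := aux_norm_sum hM Finset.univ (fun i => a i) ha.1
    obtain ⟨u, hu, hau⟩ := aux_two hpol ha.2
    obtain ⟨m, hm⟩ := hΥ.1 u hu
    refine ⟨n + 2 * m, ?_⟩
    rw [PiLp.inner_apply, hn, hau, real_inner_smul_left, real_inner_smul_right, hm]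
    push_cast
    ring
end
end

section
/- Let V be a finite-dimensional real inner product space, Υ a lattice in V such that √2·Υ is even and unimodular, M, N a polarization of Υ, and k ≥ 1 an integer. If k is even or N is an even lattice, then L(M,N,k) is an even lattice; if k is odd and N is not even, then L(M,N,k) is an odd lattice (it is integral but contains a vector of odd norm). -/
noncomputable section

open scoped RealInnerProductSpace Pointwise
open Module

variable {V : Type*} [NormedAddCommGroup V] [InnerProductSpace ℝ V]

/-- In an integral lattice, the sum of the norms agrees with the norm of the sum modulo 2. -/
lemma sum_norm_parity (M : Submodule ℤ V) (hM : IsIntegralLat M) {ι : Type*} (s : Finset ι)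
    (x : ι → V) (hx : ∀ i, x i ∈ M) :
    ∃ n : ℤ, ∑ i ∈ s, ⟪x i, x i⟫ = ⟪∑ i ∈ s, x i, ∑ i ∈ s, x i⟫ + 2 * (n : ℝ) := by
  classical
  induction s using Finset.induction_on with
  | empty => exact ⟨0, by simp⟩
  | insert a s ha ih =>
    obtain ⟨n, hn⟩ := ih
    obtain ⟨m, hm⟩ := hM (x a) (hx a) (∑ i ∈ s, x i) (M.sum_mem fun i _ => hx i)
    refine ⟨n - m, ?_⟩
    rw [Finset.sum_insert ha, Finset.sum_insert ha, hn, inner_add_left, inner_add_right,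
      inner_add_right, real_inner_comm (x a) (∑ i ∈ s, x i), hm]
    push_cast
    ring

/-- Every element of `L(M,N,k)` splits as `x + (y,…,y)` with `∑ x_i = 2u`, `u ∈ Υ`. -/
lemma mem_LMN_decomp {Υ M N : Submodule ℤ V} (hpol : IsPolarization Υ M N) {k : ℕ}
    {v : PiLp 2 fun _ : Fin k => V} (hv : v ∈ LMN M N k) :
    ∃ (x : Fin k → V) (y u : V), (∀ i, x i ∈ M) ∧ y ∈ N ∧ u ∈ Υ ∧
      ∑ i, x i = (2 : ℝ) • u ∧ ∀ i, v i = x i + y := by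
  obtain ⟨a, ha, b, ⟨y, hy, hb⟩, rfl⟩ := Submodule.mem_sup.1 hv
  have h2 := ha.2
  rw [hpol.2.2.2.2.2] at h2
  obtain ⟨u, hu, hu2⟩ := (Submodule.mem_smul_pointwise_iff_exists _ _ _).1 h2
  refine ⟨fun i => a i, y, u, ha.1, hy, hu, ?_, fun i => ?_⟩
  · rw [← hu2, two_smul, two_smul]
  · rw [← hb i]
    rfl

lemma inner_decomp {k : ℕ} {v v' : PiLp 2 fun _ : Fin k => V} {x x' : Fin k → V}
    {y y' u u' : V} (hs : ∑ i, x i = (2 : ℝ) • u) (hs' : ∑ i, x' i = (2 : ℝ) • u')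
    (hv : ∀ i, v i = x i + y) (hv' : ∀ i, v' i = x' i + y') :
    ⟪v, v'⟫ = ∑ i, ⟪x i, x' i⟫ + 2 * ⟪u, y'⟫ + 2 * ⟪y, u'⟫ + k * ⟪y, y'⟫ := by
  rw [PiLp.inner_apply]
  simp only [hv, hv', inner_add_left, inner_add_right, Finset.sum_add_distrib]
  rw [← sum_inner, ← inner_sum, hs, hs', real_inner_smul_left, real_inner_smul_right]
  simp
  ring

lemma LMN_integral {Υ M N : Submodule ℤ V} (hΥ : SqrtTwoEvenUnimod Υ)
    (hpol : IsPolarization Υ M N) (k : ℕ) : IsIntegralLat (LMN M N k) := by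
  intro v hv v' hv'
  obtain ⟨x, y, u, hx, hy, hu, hs, hv⟩ := mem_LMN_decomp hpol hv
  obtain ⟨x', y', u', hx', hy', hu', hs', hv'⟩ := mem_LMN_decomp hpol hv'
  rw [inner_decomp hs hs' hv hv']
  obtain ⟨-, hN, hMi, hNi, -, -⟩ := hpol
  choose f hf using fun i => hMi (x i) (hx i) (x' i) (hx' i)
  obtain ⟨a, ha⟩ := hΥ.2.1 u hu y' (hN hy')
  obtain ⟨b, hb⟩ := hΥ.2.1 y (hN hy) u' hu'
  obtain ⟨c, hc⟩ := hNi y hy y' hy'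
  refine ⟨∑ i, f i + a + b + k * c, ?_⟩
  simp only [hf, ha, hb, hc]
  push_cast
  ring

/-- The norm of an element of `L(M,N,k)` is `k⟪y,y⟫` modulo 2. -/
lemma LMN_norm {Υ M N : Submodule ℤ V} (hΥ : SqrtTwoEvenUnimod Υ)
    (hpol : IsPolarization Υ M N) (k : ℕ) {v : PiLp 2 fun _ : Fin k => V}
    (hv : v ∈ LMN M N k) : ∃ y ∈ N, ∃ n : ℤ, ⟪v, v⟫ = 2 * (n : ℝ) + k * ⟪y, y⟫ := by
  obtain ⟨x, y, u, hx, hy, hu, hs, hv⟩ := mem_LMN_decomp hpol hv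
  obtain ⟨-, hN, hMi, hNi, -, -⟩ := hpol
  obtain ⟨n, hn⟩ := sum_norm_parity M hMi Finset.univ x hx
  obtain ⟨a, ha⟩ := hΥ.2.1 u hu y (hN hy)
  obtain ⟨b, hb⟩ := hΥ.1 u hu
  refine ⟨y, hy, n + 2 * b + a, ?_⟩
  rw [inner_decomp hs hs hv hv, hn, hs, real_inner_smul_left, real_inner_smul_right,
    real_inner_comm u y, hb]
  push_cast
  linear_combination 2 * ha

/-- if `k` is even or `N` is even, `L(M,N,k)` is even; if `k` is odd and `N`
is not even, then `L(M,N,k)` is odd: integral, but containing a vector of odd norm. -/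
theorem statement1 (Υ M N : Submodule ℤ V) (hΥlat : IsLat Υ)
    (hΥ : SqrtTwoEvenUnimod Υ) (hpol : IsPolarization Υ M N) (k : ℕ) (hk : 1 ≤ k) :
    ((Even k ∨ ∀ y ∈ N, ∃ n : ℤ, ⟪y, y⟫ = 2 * (n : ℝ)) → IsEvenLat (LMN M N k)) ∧
    ((Odd k ∧ ¬ (∀ y ∈ N, ∃ n : ℤ, ⟪y, y⟫ = 2 * (n : ℝ))) →
      IsIntegralLat (LMN M N k) ∧
      ∃ v ∈ LMN M N k, ∃ n : ℤ, Odd n ∧ ⟪v, v⟫ = (n : ℝ)) := by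
  have hNi := hpol.2.2.2.1
  refine ⟨fun h => ⟨LMN_integral hΥ hpol k, fun v hv => ?_⟩, fun ⟨hkodd, h⟩ =>
    ⟨LMN_integral hΥ hpol k, ?_⟩⟩
  · obtain ⟨y, hy, n, hn⟩ := LMN_norm hΥ hpol k hv
    rcases h with ⟨m, hm⟩ | h
    · obtain ⟨c, hc⟩ := hNi y hy y hy
      refine ⟨n + m * c, ?_⟩
      rw [hn, hc, hm]
      push_cast
      ring
    · obtain ⟨c, hc⟩ := h y hy
      refine ⟨n + k * c, ?_⟩
      rw [hn, hc]
      push_cast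
      ring
  · push Not at h
    obtain ⟨y, hy, hyn⟩ := h
    obtain ⟨c, hc⟩ := hNi y hy y hy
    have hcodd : Odd c := by
      rcases Int.even_or_odd c with ⟨d, hd⟩ | hodd
      · exact absurd (by rw [hc, hd]; push_cast; ring) (hyn d)
      · exact hodd
    refine ⟨WithLp.toLp 2 fun _ => y, Submodule.mem_sup_right ⟨y, hy, fun _ => rfl⟩, k * c,
      ((Int.odd_coe_nat k).2 hkodd).mul hcodd, ?_⟩
    rw [PiLp.inner_apply]
    simp only [hc]
    simp
end
end

section
/- Let V be a finite-dimensional real inner product space, Υ a lattice in V such that √2·Υ is even and unimodular, M, N a polarization of Υ, and k ≥ 1 an integer. Then L(M,N,k) is a unimodular lattice in V^k: it has full rank k·dim V and the Gram matrix of any ℤ-basis of L(M,N,k) has determinant 1. -/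
noncomputable section

open scoped RealInnerProductSpace Pointwise
open Module

variable {V : Type*} [NormedAddCommGroup V] [InnerProductSpace ℝ V]

theorem selfdual_main {E : Type*} [NormedAddCommGroup E] [InnerProductSpace ℝ E]
    [FiniteDimensional ℝ E] (L : Submodule ℤ E) (hI : IsIntegralLat L)
    (hD : ∀ v : E, (∀ x ∈ L, ∃ n : ℤ, ⟪v, x⟫ = (n : ℝ)) → v ∈ L) :
    IsLat L ∧ finrank ℤ L = finrank ℝ E ∧
    ∀ (n : ℕ) (b : Basis (Fin n) ℤ L),
      (Matrix.of fun i j : Fin n => ⟪(b i : E), (b j : E)⟫).det = 1 := by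
  have hspan : Submodule.span ℝ (L : Set E) = ⊤ := by
    rw [← Submodule.orthogonal_eq_bot_iff, Submodule.eq_bot_iff]
    intro v hv
    rw [Submodule.mem_orthogonal'] at hv
    have hvL : v ∈ L := hD v fun x hx => ⟨0, by
      rw [hv x (Submodule.subset_span hx)]; simp⟩
    exact inner_self_eq_zero.mp (hv v (Submodule.subset_span hvL))
  have hdisc : DiscreteTopology L := by
    rw [discreteTopology_iff_isOpen_singleton_zero, Metric.isOpen_singleton_iff]
    refine ⟨1, one_pos, fun y hy => ?_⟩
    obtain ⟨m, hm⟩ := hI y y.2 y y.2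
    have hy' : ‖(y : E)‖ < 1 := by
      rw [dist_zero_right] at hy
      simpa using hy
    rw [real_inner_self_eq_norm_sq] at hm
    have h1 : (m : ℝ) < 1 := by
      rw [← hm]
      have := norm_nonneg (y : E)
      nlinarith
    have h0 : (0 : ℝ) ≤ m := by rw [← hm]; positivity
    have : m = 0 := by
      have h1' : m < 1 := by exact_mod_cast h1
      have h0' : 0 ≤ m := by exact_mod_cast h0
      omega
    rw [this] at hm
    have : (y : E) = 0 := by
      rw [← norm_eq_zero]
      exact pow_eq_zero_iff (two_ne_zero) |>.mp (by simpa using hm)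
    exact Subtype.ext this
  have : IsZLattice ℝ L := ⟨hspan⟩
  refine ⟨⟨ZLattice.FG ℝ L, hspan⟩, ZLattice.rank ℝ L, fun n b => ?_⟩
  let e : Basis (Fin n) ℝ E := b.ofZLatticeBasis ℝ L
  have he : ∀ i, e i = (b i : E) := fun i => b.ofZLatticeBasis_apply ℝ L i
  choose G hG using fun i j : Fin n => hI (b i) (b i).2 (b j) (b j).2
  let w : Fin n → E := fun i =>
    (InnerProductSpace.toDual ℝ E).symm (LinearMap.toContinuousLinearMap (e.coord i))
  have hw : ∀ i x, ⟪w i, x⟫ = e.coord i x := fun i x => by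
    simp only [w, InnerProductSpace.toDual_symm_apply]; rfl
  have hwL : ∀ i, w i ∈ L := fun i => hD _ fun x hx => by
    rw [hw]
    refine ⟨b.repr ⟨x, hx⟩ i, ?_⟩
    have := b.ofZLatticeBasis_repr_apply ℝ L ⟨x, hx⟩ i
    simpa using this
  let C : Matrix (Fin n) (Fin n) ℤ := Matrix.of fun i j => b.repr ⟨w i, hwL i⟩ j
  have hC : ∀ i, w i = ∑ j, C i j • (b j : E) := fun i => by
    have := congrArg (Subtype.val) (b.sum_repr ⟨w i, hwL i⟩)
    refine this.symm.trans ?_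
    rw [Submodule.coe_sum]
    rfl
  have hCG : C * Matrix.of G = 1 := by
    ext i k
    have h := hw i (b k)
    rw [hC i, sum_inner] at h
    have h2 : ∀ j, ⟪C i j • (b j : E), (b k : E)⟫ = ((C i j * G j k : ℤ) : ℝ) := fun j => by
      rw [← Int.cast_smul_eq_zsmul ℝ, real_inner_smul_left, hG]; push_cast; rfl
    rw [Finset.sum_congr rfl fun j _ => h2 j, ← he k] at h
    rw [Matrix.mul_apply, Matrix.one_apply]
    have h3 : e.coord i (e k) = ((if i = k then 1 else 0 : ℤ) : ℝ) := by
      simp [Finsupp.single_apply, eq_comm]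
    rw [h3] at h
    exact_mod_cast h
  have hdet : C.det * (Matrix.of G).det = 1 := by
    rw [← Matrix.det_mul, hCG, Matrix.det_one]
  have hmap : (Matrix.of fun i j : Fin n => ⟪(b i : E), (b j : E)⟫)
      = (Matrix.of G).map (Int.castRingHom ℝ) := by
    ext i j; simp [hG]
  have hnn : 0 ≤ (Matrix.of fun i j : Fin n => ⟪(b i : E), (b j : E)⟫).det :=
    (Matrix.posSemidef_gram ℝ (fun i => (b i : E))).det_nonneg
  have hd : (Matrix.of fun i j : Fin n => ⟪(b i : E), (b j : E)⟫).det
      = (((Matrix.of G).det : ℤ) : ℝ) := by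
    rw [hmap]
    exact ((Int.castRingHom ℝ).map_det _).symm
  rw [hd] at hnn ⊢
  have hnn' : 0 ≤ (Matrix.of G).det := by exact_mod_cast hnn
  rcases Int.isUnit_iff.mp (IsUnit.of_mul_eq_one_right _ hdet) with h | h
  · rw [h]; simp
  · omega

theorem upsilon_selfdual (Υ : Submodule ℤ V) (hlat : IsLat Υ) (hΥ : SqrtTwoEvenUnimod Υ)
    (v : V) (hv : ∀ u ∈ Υ, ∃ n : ℤ, 2 * ⟪v, u⟫ = (n : ℝ)) : v ∈ Υ := by
  obtain ⟨-, h2, n, b, hdet⟩ := hΥ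
  choose G hG using fun i j : Fin n => h2 (b i) (b i).2 (b j) (b j).2
  choose z hz using fun i : Fin n => hv (b i) (b i).2
  have hmap : (Matrix.of fun i j : Fin n => 2 * ⟪(b i : V), (b j : V)⟫)
      = (Matrix.of G).map (Int.castRingHom ℝ) := by
    ext i j; simp [hG]
  have hd : (Matrix.of G).det = 1 := by
    rw [hmap] at hdet
    have h : (((Matrix.of G).det : ℤ) : ℝ) = 1 := by
      rw [← hdet]; exact ((Int.castRingHom ℝ).map_det _)
    exact_mod_cast h
  have hinv : Matrix.of G * (Matrix.of G)⁻¹ = 1 :=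
    Matrix.mul_nonsing_inv _ (by rw [hd]; exact isUnit_one)
  let c : Fin n → ℤ := Matrix.mulVec (Matrix.of G)⁻¹ z
  have hc : Matrix.mulVec (Matrix.of G) c = z := by
    simp only [c, Matrix.mulVec_mulVec, hinv, Matrix.one_mulVec]
  let u : Υ := ∑ j, c j • b j
  have key : ∀ i, ⟪v - (u : V), (b i : V)⟫ = 0 := fun i => by
    have hu : 2 * ⟪(b i : V), (u : V)⟫ = z i := by
      have : (u : V) = ∑ j, c j • (b j : V) := by simp [u]
      rw [this, inner_sum, Finset.mul_sum, ← hc, Matrix.mulVec, dotProduct]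
      push_cast
      refine Finset.sum_congr rfl fun j _ => ?_
      rw [← Int.cast_smul_eq_zsmul ℝ, real_inner_smul_right, Matrix.of_apply, ← hG]; ring
    rw [inner_sub_left, real_inner_comm (b i : V) (u : V)]
    have := hz i
    linarith
  have hortho : ∀ x ∈ Υ, ⟪v - (u : V), x⟫ = 0 := fun x hx => by
    have : x = ∑ j, b.repr ⟨x, hx⟩ j • (b j : V) := by
      have := congrArg (Subtype.val) (b.sum_repr ⟨x, hx⟩)
      refine this.symm.trans ?_
      rw [Submodule.coe_sum]
      rfl
    rw [this, inner_sum]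
    refine Finset.sum_eq_zero fun j _ => ?_
    rw [← Int.cast_smul_eq_zsmul ℝ, real_inner_smul_right, key, mul_zero]
  have hz0 : v - (u : V) = 0 := by
    have hmem : v - (u : V) ∈ Submodule.span ℝ (Υ : Set V) := by rw [hlat.2]; trivial
    have : ∀ x ∈ Submodule.span ℝ (Υ : Set V), ⟪v - (u : V), x⟫ = 0 := fun x hx => by
      induction hx using Submodule.span_induction with
      | mem x h => exact hortho x h
      | zero => simp
      | add x y _ _ hx hy => rw [inner_add_right, hx, hy, add_zero]
      | smul a x _ hx => rw [real_inner_smul_right, hx, mul_zero]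
    exact inner_self_eq_zero.mp (this _ hmem)
  rw [sub_eq_zero.mp hz0]
  exact u.2

/-- If `w ∈ M + N` pairs integrally with `M` then `w ∈ M`. -/
theorem polar_selfdual (Υ M N : Submodule ℤ V) (hlat : IsLat Υ) (hΥ : SqrtTwoEvenUnimod Υ)
    (hM : IsIntegralLat M) (hN : IsIntegralLat N) (hsup : M ⊔ N = Υ)
    (hinf : M ⊓ N = (2 : ℤ) • Υ) (w : V) (hw : w ∈ Υ)
    (h : ∀ m ∈ M, ∃ n : ℤ, ⟪w, m⟫ = (n : ℝ)) : w ∈ M := by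
  rw [← hsup] at hw
  obtain ⟨m, hm, n, hn, rfl⟩ := Submodule.mem_sup.mp hw
  refine M.add_mem hm ?_
  have hh : (1/2 : ℝ) • n ∈ Υ := by
    refine upsilon_selfdual Υ hlat hΥ _ fun u hu => ?_
    rw [← hsup] at hu
    obtain ⟨m', hm', n', hn', rfl⟩ := Submodule.mem_sup.mp hu
    obtain ⟨p, hp⟩ := h m' hm'
    obtain ⟨q, hq⟩ := hM m hm m' hm'
    obtain ⟨r, hr⟩ := hN n hn n' hn'
    refine ⟨p - q + r, ?_⟩
    rw [inner_add_left] at hp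
    rw [real_inner_smul_left, inner_add_right]
    push_cast
    linarith
  have h2 : (2 : ℤ) • ((1/2 : ℝ) • n) ∈ (2 : ℤ) • Υ := Submodule.smul_mem_pointwise_smul _ _ _ hh
  have h3 : (2 : ℤ) • ((1/2 : ℝ) • n) = n := by
    rw [← Int.cast_smul_eq_zsmul ℝ, smul_smul]; norm_num
  rw [h3, ← hinf] at h2
  exact h2.1

/-- `L(M,N,k)` is a unimodular lattice in `V^k`: it is a full lattice, of rank
`k·dim V`, and the Gram matrix of any `ℤ`-basis has determinant 1. -/
theorem statement2 [FiniteDimensional ℝ V] (Υ M N : Submodule ℤ V) (hΥlat : IsLat Υ)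
    (hΥ : SqrtTwoEvenUnimod Υ) (hpol : IsPolarization Υ M N) (k : ℕ) (hk : 1 ≤ k) :
    IsLat (LMN M N k) ∧
    finrank ℤ (LMN M N k) = k * finrank ℝ V ∧
    ∀ (n : ℕ) (b : Basis (Fin n) ℤ (LMN M N k)),
      (Matrix.of fun i j : Fin n =>
        ⟪(b i : PiLp 2 fun _ : Fin k => V), (b j : PiLp 2 fun _ : Fin k => V)⟫).det = 1 := by
  obtain ⟨hMΥ, hNΥ, hM, hN, hsup, hinf⟩ := hpol
  have hrank : finrank ℝ (PiLp 2 fun _ : Fin k => V) = k * finrank ℝ V := by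
    rw [LinearEquiv.finrank_eq (WithLp.linearEquiv 2 ℝ (Fin k → V)), Module.finrank_pi_fintype]
    simp
  rw [← hrank]
  have hsM := polar_selfdual Υ M N hΥlat hΥ hM hN hsup hinf
  have hsN := polar_selfdual Υ N M hΥlat hΥ hN hM (by rw [sup_comm, hsup])
    (by rw [inf_comm, hinf])
  -- membership characterisation
  have hmem : ∀ v : PiLp 2 fun _ : Fin k => V, v ∈ LMN M N k ↔
      ∃ y ∈ N, (∀ i, v i - y ∈ M) ∧ ∑ i, (v i - y) ∈ M ⊓ N := by
    intro v
    constructor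
    · intro hv
      obtain ⟨a, ha, c, ⟨y, hy, hc⟩, rfl⟩ := Submodule.mem_sup.mp hv
      have : ∀ i, (a + c) i - y = a i := fun i => by simp [hc i]
      refine ⟨y, hy, ?_, ?_⟩
      · intro i; rw [this]; exact ha.1 i
      · simp_rw [this]; exact ha.2
    · rintro ⟨y, hy, h1, h2⟩
      refine Submodule.mem_sup.mpr ⟨WithLp.toLp 2 fun i => v i - y, ⟨h1, h2⟩,
        WithLp.toLp 2 fun _ => y, ⟨y, hy, fun i => rfl⟩, ?_⟩
      ext i; simp
  have hsumInt : ∀ f : Fin k → ℝ, (∀ i, ∃ n : ℤ, f i = n) → ∃ n : ℤ, ∑ i, f i = n := by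
    intro f hf
    choose g hg using hf
    exact ⟨∑ i, g i, by push_cast; exact Finset.sum_congr rfl fun i _ => hg i⟩
  refine selfdual_main (LMN M N k) ?_ ?_
  · intro v hv w hw
    obtain ⟨y, hy, hv1, hv2⟩ := (hmem v).mp hv
    obtain ⟨z, hz, hw1, hw2⟩ := (hmem w).mp hw
    obtain ⟨p, hp⟩ := hsumInt (fun i => ⟪v i - y, w i - z⟫) fun i => hM _ (hv1 i) _ (hw1 i)
    obtain ⟨q, hq⟩ := hN y hy _ hw2.2
    obtain ⟨r, hr⟩ := hN _ hv2.2 z hz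
    obtain ⟨s, hs⟩ := hN y hy z hz
    refine ⟨p + q + r + k * s, ?_⟩
    have : ∀ i, ⟪v i, w i⟫ = ⟪v i - y, w i - z⟫ + ⟪y, w i - z⟫ + ⟪v i - y, z⟫ + ⟪y, z⟫ := by
      intro i
      simp only [inner_sub_left, inner_sub_right]; ring
    rw [PiLp.inner_apply, Finset.sum_congr rfl fun i _ => this i, Finset.sum_add_distrib,
      Finset.sum_add_distrib, Finset.sum_add_distrib, hp, ← inner_sum, hq, ← sum_inner, hr, hs]
    simp
  · intro v hv
    have two_mem : ∀ u ∈ Υ, (2 : ℤ) • u ∈ M ⊓ N := fun u hu => by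
      rw [hinf]; exact Submodule.smul_mem_pointwise_smul _ _ _ hu
    have hsingle : ∀ (u : V) (i : Fin k), ⟪v, WithLp.toLp 2 (Pi.single i u)⟫ = ⟪v i, u⟫ := by
      intro u i
      rw [PiLp.inner_apply, Finset.sum_eq_single i]
      · simp
      · intro j _ hj; simp [Pi.single_eq_of_ne hj]
      · simp
    have hsmem : ∀ (m : V), m ∈ M → ∀ i j, (Pi.single i m : Fin k → V) j ∈ M := by
      intro m hm i j
      by_cases h : j = i
      · subst h; simpa using hm
      · simp [Pi.single_eq_of_ne h]
    have hvΥ : ∀ i, v i ∈ Υ := by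
      intro i
      refine upsilon_selfdual Υ hΥlat hΥ _ fun u hu => ?_
      obtain ⟨n, hn⟩ := hv (WithLp.toLp 2 (Pi.single i ((2 : ℤ) • u))) ((hmem _).mpr
        ⟨0, N.zero_mem, fun j => by
          simpa using hsmem _ (two_mem u hu).1 i j, by
          have h := two_mem u hu
          simpa using h⟩)
      refine ⟨n, ?_⟩
      rw [hsingle, ← Int.cast_smul_eq_zsmul ℝ, real_inner_smul_right] at hn
      exact_mod_cast hn
    have hdiff : ∀ i j, v i - v j ∈ M := by
      intro i j
      refine hsM _ (Υ.sub_mem (hvΥ i) (hvΥ j)) fun m hm => ?_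
      obtain ⟨n, hn⟩ := hv (WithLp.toLp 2 (Pi.single i m) - WithLp.toLp 2 (Pi.single j m))
        ((hmem _).mpr ⟨0, N.zero_mem, fun l => by
          simpa [Pi.single_apply] using M.sub_mem (hsmem _ hm i l) (hsmem _ hm j l), by
          simp [Finset.sum_sub_distrib]⟩)
      refine ⟨n, ?_⟩
      rw [inner_sub_right, hsingle, hsingle] at hn
      rw [inner_sub_left, hn]
    let i0 : Fin k := ⟨0, hk⟩
    have h0 := hvΥ i0
    rw [← hsup] at h0
    obtain ⟨m, hm, y, hy, hmy⟩ := Submodule.mem_sup.mp h0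
    have hvM : ∀ i, v i - y ∈ M := fun i => by
      have : v i - y = (v i - v i0) + m := by rw [← hmy]; abel
      rw [this]; exact M.add_mem (hdiff i i0) hm
    refine (hmem v).mpr ⟨y, hy, hvM, ?_⟩
    have hsM' : ∑ i, (v i - y) ∈ M := Submodule.sum_mem _ fun i _ => hvM i
    refine ⟨hsM', hsN _ (hMΥ hsM') fun z hz => ?_⟩
    obtain ⟨n, hn⟩ := hv (WithLp.toLp 2 fun _ => z) ((hmem _).mpr ⟨z, hz, by simp, by simp⟩)
    obtain ⟨s, hs⟩ := hN y hy z hz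
    refine ⟨n - k * s, ?_⟩
    rw [PiLp.inner_apply] at hn
    rw [sum_inner]
    simp only [inner_sub_left, Finset.sum_sub_distrib, hs]
    push_cast
    rw [← hn]
    simp
end
end

section
/- Let V be a finite-dimensional real inner product space, Υ a lattice in V such that √2·Υ is even and unimodular, M, N a polarization of Υ, and k ≥ 2 an integer. Then μ(L_M) = 2·min(μ(M), 2μ(Υ)) and μ(L^N) = k·μ(N), where μ denotes minimum norm. -/
noncomputable section

open scoped RealInnerProductSpace Pointwise
open Module

variable {V : Type*} [NormedAddCommGroup V] [InnerProductSpace ℝ V]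

theorem minNorm_le_of_mem (L : Submodule ℤ V) (x : V) (hx : x ∈ L) (h0 : x ≠ 0) :
    minNorm L ≤ ⟪x, x⟫ := by
  refine csInf_le ⟨0, ?_⟩ ⟨x, hx, h0, rfl⟩
  rintro r ⟨y, -, -, rfl⟩
  exact real_inner_self_nonneg

theorem le_minNorm_of_forall (L : Submodule ℤ V) (c : ℝ) (hne : ∃ x ∈ L, x ≠ 0)
    (h : ∀ x ∈ L, x ≠ 0 → c ≤ ⟪x, x⟫) : c ≤ minNorm L := by
  obtain ⟨x, hx, h0⟩ := hne
  refine le_csInf ⟨_, x, hx, h0, rfl⟩ ?_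
  rintro r ⟨y, hy, hy0, rfl⟩
  exact h y hy hy0

theorem minNorm_eq_zero_of_forall (L : Submodule ℤ V) (h : ∀ x ∈ L, x = 0) : minNorm L = 0 := by
  have : {r : ℝ | ∃ x ∈ L, x ≠ 0 ∧ ⟪x, x⟫ = r} = ∅ := by
    ext r
    simp only [Set.mem_setOf_eq, Set.mem_empty_iff_false, iff_false]
    rintro ⟨x, hx, h0, -⟩
    exact h0 (h x hx)
  rw [minNorm, this, Real.sInf_empty]

/-- `μ(L_M) = 2·min(μ(M), 2μ(Υ))` and `μ(L^N) = k·μ(N)`. -/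
theorem statement3 (Υ M N : Submodule ℤ V) (hΥlat : IsLat Υ)
    (hΥ : SqrtTwoEvenUnimod Υ) (hpol : IsPolarization Υ M N) (k : ℕ) (hk : 2 ≤ k) :
    minNorm (LsubM M N k) = 2 * min (minNorm M) (2 * minNorm Υ) ∧
    minNorm (LsupN N k) = (k : ℝ) * minNorm N := by
  obtain ⟨hMΥ, hNΥ, -, -, -, hinf⟩ := hpol
  have h2mem : ∀ z, z ∈ M ⊓ N ↔ ∃ y ∈ Υ, (2 : ℤ) • y = z := by
    intro z
    rw [hinf]
    exact Submodule.mem_smul_pointwise_iff_exists z 2 Υ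
  by_cases htriv : ∀ x ∈ Υ, x = 0
  · have hM : ∀ x ∈ M, x = 0 := fun x hx => htriv x (hMΥ hx)
    have hN : ∀ x ∈ N, x = 0 := fun x hx => htriv x (hNΥ hx)
    rw [minNorm_eq_zero_of_forall Υ htriv, minNorm_eq_zero_of_forall M hM,
      minNorm_eq_zero_of_forall N hN, minNorm_eq_zero_of_forall, minNorm_eq_zero_of_forall]
    · simp
    · rintro v ⟨y, hy, hv⟩
      ext i
      rw [hv i, hN y hy]; rfl
    · rintro v ⟨hv, -⟩
      ext i
      exact hM _ (hv i)
  push Not at htriv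
  obtain ⟨u, huΥ, hu0⟩ := htriv
  have htwo : ∀ y : V, y ≠ 0 → (2 : ℤ) • y ≠ 0 := by
    intro y hy h
    rw [two_smul, ← two_smul ℝ] at h
    exact hy ((smul_eq_zero.mp h).resolve_left two_ne_zero)
  have hin2 : ∀ y : V, ⟪(2 : ℤ) • y, (2 : ℤ) • y⟫ = 4 * ⟪y, y⟫ := by
    intro y
    rw [two_smul, inner_add_left, inner_add_right]; ring
  have hu2 := (h2mem _).2 ⟨u, huΥ, rfl⟩
  have hMne : ∃ x ∈ M, x ≠ 0 := ⟨_, hu2.1, htwo u hu0⟩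
  have hNne : ∃ x ∈ N, x ≠ 0 := ⟨_, hu2.2, htwo u hu0⟩
  have hΥne : ∃ x ∈ Υ, x ≠ 0 := ⟨u, huΥ, hu0⟩
  have hkpos : (0 : ℝ) < k := by
    have : 0 < k := by omega
    exact_mod_cast this
  let i0 : Fin k := ⟨0, by omega⟩
  let i1 : Fin k := ⟨1, by omega⟩
  have h01 : i0 ≠ i1 := by simp [i0, i1]
  -- the vectors `(2y, 0, …, 0)`
  have hA : ∀ y ∈ Υ, y ≠ 0 → ∃ v ∈ LsubM M N k, v ≠ 0 ∧ ⟪v, v⟫ = 4 * ⟪y, y⟫ := by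
    intro y hy hy0
    have hm := (h2mem _).2 ⟨y, hy, rfl⟩
    refine ⟨WithLp.toLp 2 (Pi.single i0 ((2 : ℤ) • y)), ⟨?_, ?_⟩, ?_, ?_⟩
    · intro i
      by_cases hi : i = i0
      · subst hi; simpa using hm.1
      · simp [Pi.single_eq_of_ne hi]
    · simpa using hm
    · intro h
      have := congrArg (fun v : PiLp 2 (fun _ : Fin k => V) => v i0) h
      exact htwo y hy0 (by simpa using this)
    · rw [PiLp.inner_apply, Finset.sum_eq_single i0]
      · rw [← hin2]; simp
      · intro b _ hb
        simp [Pi.single_eq_of_ne hb]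
      · simp
  -- the vectors `(x, -x, 0, …, 0)`
  have hB : ∀ x ∈ M, x ≠ 0 → ∃ v ∈ LsubM M N k, v ≠ 0 ∧ ⟪v, v⟫ = 2 * ⟪x, x⟫ := by
    intro x hx hx0
    refine ⟨WithLp.toLp 2 (Pi.single i0 x - Pi.single i1 x), ⟨?_, ?_⟩, ?_, ?_⟩
    · intro i
      have hs : ∀ j : Fin k, (Pi.single j x : Fin k → V) i ∈ M := by
        intro j
        by_cases hi : i = j
        · subst hi; simpa using hx
        · simp [Pi.single_eq_of_ne hi]
      exact M.sub_mem (hs i0) (hs i1)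
    · simp
    · intro h
      have := congrArg (fun v : PiLp 2 (fun _ : Fin k => V) => v i0) h
      exact hx0 (by simpa [Pi.single_eq_of_ne h01] using this)
    · rw [PiLp.inner_apply, Finset.sum_eq_add i0 i1 h01]
      · simp [Pi.single_eq_of_ne h01, Pi.single_eq_of_ne h01.symm]; ring
      · rintro b _ ⟨hb, hb'⟩
        simp [Pi.single_eq_of_ne hb, Pi.single_eq_of_ne hb']
      · simp
      · simp
  have hLne : ∃ v ∈ LsubM M N k, v ≠ 0 := by
    obtain ⟨v, hv, hv0, -⟩ := hA u huΥ hu0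
    exact ⟨v, hv, hv0⟩
  -- diagonal vectors
  have hD : ∀ y ∈ N, y ≠ 0 → ∃ v ∈ LsupN N k, v ≠ 0 ∧ ⟪v, v⟫ = k * ⟪y, y⟫ := by
    intro y hy hy0
    refine ⟨WithLp.toLp 2 (fun _ => y), ⟨y, hy, fun _ => rfl⟩, ?_, ?_⟩
    · intro h
      exact hy0 (congrArg (fun v : PiLp 2 (fun _ : Fin k => V) => v i0) h)
    · rw [PiLp.inner_apply]; simp
  refine ⟨le_antisymm ?_ ?_, le_antisymm ?_ ?_⟩
  · have h1 : minNorm (LsubM M N k) / 2 ≤ minNorm M := by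
      refine le_minNorm_of_forall M _ hMne fun x hx hx0 => ?_
      obtain ⟨v, hv, hv0, he⟩ := hB x hx hx0
      have := minNorm_le_of_mem _ v hv hv0
      linarith
    have h2 : minNorm (LsubM M N k) / 4 ≤ minNorm Υ := by
      refine le_minNorm_of_forall Υ _ hΥne fun x hx hx0 => ?_
      obtain ⟨v, hv, hv0, he⟩ := hA x hx hx0
      have := minNorm_le_of_mem _ v hv hv0
      linarith
    have h3 : minNorm (LsubM M N k) / 2 ≤ min (minNorm M) (2 * minNorm Υ) :=
      le_min h1 (by linarith)
    linarith
  · refine le_minNorm_of_forall _ _ hLne ?_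
    rintro v ⟨hvM, hvs⟩ hv0
    have hex : ∃ i, v i ≠ 0 := by
      by_contra! h
      exact hv0 (by ext i; exact h i)
    obtain ⟨i, hi⟩ := hex
    have hmin1 := min_le_left (minNorm M) (2 * minNorm Υ)
    have hmin2 := min_le_right (minNorm M) (2 * minNorm Υ)
    rw [PiLp.inner_apply]
    by_cases hj : ∃ j, j ≠ i ∧ v j ≠ 0
    · obtain ⟨j, hji, hj0⟩ := hj
      have h1 := minNorm_le_of_mem M _ (hvM i) hi
      have h2 := minNorm_le_of_mem M _ (hvM j) hj0
      have h3 : ∑ l ∈ ({i, j} : Finset (Fin k)), ⟪v l, v l⟫ ≤ ∑ l, ⟪v l, v l⟫ :=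
        Finset.sum_le_sum_of_subset_of_nonneg (Finset.subset_univ _)
          fun _ _ _ => real_inner_self_nonneg
      rw [Finset.sum_pair hji.symm] at h3
      linarith
    · push Not at hj
      rw [Finset.sum_eq_single i (fun b _ hb => hj b hb) (by simp)] at hvs
      obtain ⟨y, hy, hyv⟩ := (h2mem _).1 hvs
      have hy0 : y ≠ 0 := by
        rintro rfl
        exact hi (by rw [← hyv, smul_zero])
      have h1 := minNorm_le_of_mem Υ y hy hy0
      have h3 : ⟪v i, v i⟫ ≤ ∑ l, ⟪v l, v l⟫ :=
        Finset.single_le_sum (f := fun l => ⟪v l, v l⟫)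
          (fun _ _ => real_inner_self_nonneg) (Finset.mem_univ i)
      rw [← hyv, hin2] at h3
      linarith
  · have h1 : minNorm (LsupN N k) / k ≤ minNorm N := by
      refine le_minNorm_of_forall N _ hNne fun x hx hx0 => ?_
      obtain ⟨v, hv, hv0, he⟩ := hD x hx hx0
      have := minNorm_le_of_mem _ v hv hv0
      rw [div_le_iff₀ hkpos]
      linarith
    rw [div_le_iff₀ hkpos] at h1
    linarith
  · refine le_minNorm_of_forall _ _ ?_ ?_
    · obtain ⟨y, hy, hy0⟩ := hNne
      obtain ⟨v, hv, hv0, -⟩ := hD y hy hy0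
      exact ⟨v, hv, hv0⟩
    · rintro v ⟨y, hy, hvy⟩ hv0
      have hy0 : y ≠ 0 := by
        rintro rfl
        exact hv0 (by ext i; exact hvy i)
      have h1 := minNorm_le_of_mem N y hy hy0
      rw [PiLp.inner_apply]
      simp only [hvy, Finset.sum_const, Finset.card_univ, Fintype.card_fin, nsmul_eq_mul]
      exact mul_le_mul_of_nonneg_left h1 hkpos.le
end
end

section
/- Let V be a finite-dimensional real inner product space, Υ a lattice in V such that √2·Υ is even and unimodular, M, N a polarization of Υ, and k ≥ 2 an integer. Then μ(L(M,N,k)) ≤ min( k·μ(N), 2·min(μ(M), 2μ(Υ)) ). -/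
noncomputable section

open scoped RealInnerProductSpace Pointwise
open Module

variable {V : Type*} [NormedAddCommGroup V] [InnerProductSpace ℝ V]

theorem minNorm_le_mul_aux {W : Type*} [NormedAddCommGroup W] [InnerProductSpace ℝ W]
    (L : Submodule ℤ W) (K : Submodule ℤ V) (c : ℝ) (hc : 0 < c)
    (hK : ∃ x ∈ K, x ≠ 0)
    (h : ∀ x ∈ K, x ≠ 0 → ∃ y ∈ L, ⟪y, y⟫ = c * ⟪x, x⟫) :
    minNorm L ≤ c * minNorm K := by
  rw [← div_le_iff₀' hc]
  unfold minNorm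
  apply le_csInf
  · obtain ⟨x, hx, h0⟩ := hK
    exact ⟨_, x, hx, h0, rfl⟩
  · rintro r ⟨x, hx, h0, rfl⟩
    rw [div_le_iff₀' hc]
    obtain ⟨y, hy, hyx⟩ := h x hx h0
    rw [← hyx]
    apply csInf_le
    · refine ⟨0, ?_⟩
      rintro r ⟨z, _, _, rfl⟩
      exact real_inner_self_nonneg
    · refine ⟨y, hy, ?_, rfl⟩
      rintro rfl
      have : 0 < c * ⟪x, x⟫ := mul_pos hc (real_inner_self_pos.2 h0)
      rw [← hyx] at this
      simp at this

theorem minNorm_eq_zero_aux {W : Type*} [NormedAddCommGroup W] [InnerProductSpace ℝ W]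
    (L : Submodule ℤ W) (h : ∀ x ∈ L, x = 0) : minNorm L = 0 := by
  have : {r : ℝ | ∃ x ∈ L, x ≠ 0 ∧ ⟪x, x⟫ = r} = ∅ := by
    ext r
    simp only [Set.mem_ofPred_eq, Set.mem_empty_iff_false, iff_false]
    rintro ⟨x, hx, h0, _⟩
    exact h0 (h x hx)
  rw [minNorm, this, Real.sInf_empty]

/-- `μ(L(M,N,k)) ≤ min(k·μ(N), 2·min(μ(M), 2μ(Υ)))`. -/
theorem statement4 (Υ M N : Submodule ℤ V) (hΥlat : IsLat Υ)
    (hΥ : SqrtTwoEvenUnimod Υ) (hpol : IsPolarization Υ M N) (k : ℕ) (hk : 2 ≤ k) :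
    minNorm (LMN M N k) ≤ min ((k : ℝ) * minNorm N) (2 * min (minNorm M) (2 * minNorm Υ)) := by
  obtain ⟨hM, hN, -, -, -, hMN⟩ := hpol
  by_cases hz : ∀ x ∈ Υ, x = 0
  · rw [minNorm_eq_zero_aux M fun x hx => hz x (hM hx),
      minNorm_eq_zero_aux N fun x hx => hz x (hN hx), minNorm_eq_zero_aux Υ hz,
      minNorm_eq_zero_aux (LMN M N k)]
    · simp
    · intro v hv
      obtain ⟨a, ha, b, hb, rfl⟩ := Submodule.mem_sup.1 hv
      obtain ⟨y, hy, hby⟩ := hb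
      ext i
      have h1 : a i = 0 := hz _ (hM (ha.1 i))
      have h2 : b i = 0 := by rw [hby i]; exact hz _ (hN hy)
      simp [h1, h2]
  · push Not at hz
    obtain ⟨u, hu, hu0⟩ := hz
    have h2 : ∀ x ∈ Υ, (2 : ℤ) • x ∈ M ⊓ N := fun x hx => by
      rw [hMN]; exact Submodule.smul_mem_pointwise_smul x 2 Υ hx
    have hu2 : (2 : ℤ) • u ≠ 0 := by
      rw [← Int.cast_smul_eq_zsmul ℝ]
      exact smul_ne_zero (by norm_num) hu0
    have hk0 : (0 : ℝ) < k := by exact_mod_cast (by omega : 0 < k)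
    let i0 : Fin k := ⟨0, by omega⟩
    let i1 : Fin k := ⟨1, by omega⟩
    have h01 : i0 ≠ i1 := by simp [i0, i1]
    have hsub : LsubM M N k ≤ LMN M N k := le_sup_left
    have hsup : LsupN N k ≤ LMN M N k := le_sup_right
    refine le_min ?_ ?_
    · refine minNorm_le_mul_aux _ _ _ hk0 ⟨_, (h2 u hu).2, hu2⟩ fun x hx _ => ?_
      refine ⟨WithLp.toLp 2 fun _ => x, hsup ⟨x, hx, fun _ => rfl⟩, ?_⟩
      rw [PiLp.inner_apply]
      simp
    · rw [mul_min_of_nonneg _ _ (by norm_num : (0 : ℝ) ≤ 2)]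
      refine le_min ?_ ?_
      · refine minNorm_le_mul_aux _ _ _ two_pos ⟨_, (h2 u hu).1, hu2⟩ fun x hx _ => ?_
        refine ⟨PiLp.single 2 i0 x - PiLp.single 2 i1 x, hsub ⟨fun i => ?_, ?_⟩, ?_⟩
        · simp only [PiLp.sub_apply, PiLp.single_apply]
          split_ifs <;> simp [hx]
        · simp [PiLp.single_apply, Finset.sum_sub_distrib]
        · have e : ⟪(PiLp.single 2 i0 x : PiLp 2 fun _ : Fin k => V), PiLp.single 2 i1 x⟫ = 0 := by
            rw [PiLp.inner_apply]
            refine Finset.sum_eq_zero fun j _ => ?_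
            simp only [PiLp.single_apply]
            by_cases hj : j = i0
            · have : j ≠ i1 := by rw [hj]; exact h01
              simp [this]
            · simp [hj]
          rw [real_inner_sub_sub_self, e]
          simp
          ring
      · rw [← mul_assoc]
        refine minNorm_le_mul_aux _ _ _ (by norm_num) ⟨u, hu, hu0⟩ fun x hx _ => ?_
        refine ⟨PiLp.single 2 i0 ((2 : ℤ) • x), hsub ⟨fun i => ?_, ?_⟩, ?_⟩
        · simp only [PiLp.single_apply]
          split_ifs
          · exact (h2 x hx).1
          · exact M.zero_mem
        · have := h2 x hx
          simpa [PiLp.single_apply] using this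
        · rw [← Int.cast_smul_eq_zsmul ℝ]
          rw [real_inner_self_eq_norm_sq, PiLp.norm_single, norm_smul, real_inner_self_eq_norm_sq]
          norm_num
          ring
end
end

section
/- There exists a positive definite even unimodular lattice of rank 24 whose minimum norm is 4 (a Leech lattice exists). That is, there is a lattice L in a 24-dimensional real inner product space with ⟪x,y⟫ ∈ ℤ and ⟪x,x⟫ ∈ 2ℤ for all x,y ∈ L, Gram determinant 1, and ⟪x,x⟫ ≥ 4 for all nonzero x ∈ L. -/
noncomputable section

open scoped RealInnerProductSpace Pointwise
open Module

variable {V : Type*} [NormedAddCommGroup V] [InnerProductSpace ℝ V]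

/-- An integral lower triangular basis matrix of `√8` times the Leech lattice. -/
def leechB : Fin 24 → Fin 24 → ℤ := ![
  ![8, 0, 0, 0, 0, 0, 0, 0, 0, 0, 0, 0, 0, 0, 0, 0, 0, 0, 0, 0, 0, 0, 0, 0],
  ![4, 4, 0, 0, 0, 0, 0, 0, 0, 0, 0, 0, 0, 0, 0, 0, 0, 0, 0, 0, 0, 0, 0, 0],
  ![4, 0, 4, 0, 0, 0, 0, 0, 0, 0, 0, 0, 0, 0, 0, 0, 0, 0, 0, 0, 0, 0, 0, 0],
  ![4, 0, 0, 4, 0, 0, 0, 0, 0, 0, 0, 0, 0, 0, 0, 0, 0, 0, 0, 0, 0, 0, 0, 0],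
  ![4, 0, 0, 0, 4, 0, 0, 0, 0, 0, 0, 0, 0, 0, 0, 0, 0, 0, 0, 0, 0, 0, 0, 0],
  ![4, 0, 0, 0, 0, 4, 0, 0, 0, 0, 0, 0, 0, 0, 0, 0, 0, 0, 0, 0, 0, 0, 0, 0],
  ![4, 0, 0, 0, 0, 0, 4, 0, 0, 0, 0, 0, 0, 0, 0, 0, 0, 0, 0, 0, 0, 0, 0, 0],
  ![4, 0, 0, 0, 0, 0, 0, 4, 0, 0, 0, 0, 0, 0, 0, 0, 0, 0, 0, 0, 0, 0, 0, 0],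
  ![4, 0, 0, 0, 0, 0, 0, 0, 4, 0, 0, 0, 0, 0, 0, 0, 0, 0, 0, 0, 0, 0, 0, 0],
  ![4, 0, 0, 0, 0, 0, 0, 0, 0, 4, 0, 0, 0, 0, 0, 0, 0, 0, 0, 0, 0, 0, 0, 0],
  ![4, 0, 0, 0, 0, 0, 0, 0, 0, 0, 4, 0, 0, 0, 0, 0, 0, 0, 0, 0, 0, 0, 0, 0],
  ![4, 0, 0, 0, 0, 0, 0, 0, 0, 0, 0, 4, 0, 0, 0, 0, 0, 0, 0, 0, 0, 0, 0, 0],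
  ![2, 0, 2, 0, 2, 2, 2, 0, 0, 0, 2, 2, 2, 0, 0, 0, 0, 0, 0, 0, 0, 0, 0, 0],
  ![2, 2, 2, 2, 0, 0, 2, 0, 0, 2, 0, 2, 0, 2, 0, 0, 0, 0, 0, 0, 0, 0, 0, 0],
  ![0, 0, 0, 2, 0, 2, 2, 0, 2, 2, 2, 2, 0, 0, 2, 0, 0, 0, 0, 0, 0, 0, 0, 0],
  ![0, 0, 2, 0, 2, 2, 0, 2, 2, 2, 2, 0, 0, 0, 0, 2, 0, 0, 0, 0, 0, 0, 0, 0],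
  ![0, 2, 0, 2, 2, 0, 2, 2, 2, 2, 0, 0, 0, 0, 0, 0, 2, 0, 0, 0, 0, 0, 0, 0],
  ![2, 0, 2, 2, 0, 2, 2, 2, 2, 0, 0, 0, 0, 0, 0, 0, 0, 2, 0, 0, 0, 0, 0, 0],
  ![2, 0, 0, 2, 2, 2, 0, 2, 0, 2, 0, 2, 0, 0, 0, 0, 0, 0, 2, 0, 0, 0, 0, 0],
  ![2, 2, 0, 0, 2, 0, 0, 0, 2, 2, 2, 2, 0, 0, 0, 0, 0, 0, 0, 2, 0, 0, 0, 0],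
  ![0, 2, 2, 0, 0, 0, 2, 2, 2, 0, 2, 2, 0, 0, 0, 0, 0, 0, 0, 0, 2, 0, 0, 0],
  ![2, 2, 0, 0, 0, 2, 2, 2, 0, 2, 2, 0, 0, 0, 0, 0, 0, 0, 0, 0, 0, 2, 0, 0],
  ![0, 2, 2, 2, 2, 2, 0, 0, 2, 0, 0, 2, 0, 0, 0, 0, 0, 0, 0, 0, 0, 0, 2, 0],
  ![-3, 1, 1, 1, 1, 1, 1, 1, 1, 1, 1, 1, 1, 1, 1, 1, 1, 1, 1, 1, 1, 1, 1, 1]]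

/-- Weight of a word of the extended binary Golay code. -/
def golayWt (a0 a1 a2 a3 a4 a5 a6 a7 a8 a9 a10 d : Bool) : ℕ :=
  (a0 ^^ a1 ^^ a5 ^^ a6 ^^ a7 ^^ a9 ^^ d).toNat +
  (a1 ^^ a4 ^^ a7 ^^ a8 ^^ a9 ^^ a10 ^^ d).toNat +
  (a0 ^^ a1 ^^ a3 ^^ a5 ^^ a8 ^^ a10 ^^ d).toNat +
  (a1 ^^ a2 ^^ a4 ^^ a5 ^^ a6 ^^ a10 ^^ d).toNat +
  (a0 ^^ a3 ^^ a4 ^^ a6 ^^ a7 ^^ a10 ^^ d).toNat +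
  (a0 ^^ a2 ^^ a3 ^^ a5 ^^ a6 ^^ a9 ^^ a10 ^^ d).toNat +
  (a0 ^^ a1 ^^ a2 ^^ a4 ^^ a5 ^^ a8 ^^ a9 ^^ d).toNat +
  (a3 ^^ a4 ^^ a5 ^^ a6 ^^ a8 ^^ a9 ^^ d).toNat +
  (a2 ^^ a3 ^^ a4 ^^ a5 ^^ a7 ^^ a8 ^^ a10 ^^ d).toNat +
  (a1 ^^ a2 ^^ a3 ^^ a4 ^^ a6 ^^ a7 ^^ a9 ^^ d).toNat +
  (a0 ^^ a2 ^^ a3 ^^ a7 ^^ a8 ^^ a9 ^^ d).toNat +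
  (a0 ^^ a1 ^^ a2 ^^ a6 ^^ a7 ^^ a8 ^^ a10 ^^ d).toNat +
  (a0 ^^ d).toNat +
  (a1 ^^ d).toNat +
  (a2 ^^ d).toNat +
  (a3 ^^ d).toNat +
  (a4 ^^ d).toNat +
  (a5 ^^ d).toNat +
  (a6 ^^ d).toNat +
  (a7 ^^ d).toNat +
  (a8 ^^ d).toNat +
  (a9 ^^ d).toNat +
  (a10 ^^ d).toNat +
  (d).toNat

theorem golay_min : ∀ a0 a1 a2 a3 a4 a5 a6 a7 a8 a9 a10 d : Bool,
    8 ≤ golayWt a0 a1 a2 a3 a4 a5 a6 a7 a8 a9 a10 d ∨ (a0 || a1 || a2 || a3 || a4 || a5 || a6 || a7 || a8 || a9 || a10 || d) = false := by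
  decide +kernel

theorem bodd_le_sq (y : ℤ) : ((Int.bodd y).toNat : ℤ) ≤ y ^ 2 := by
  rcases h : Int.bodd y with _ | _
  · simp; positivity
  · have h0 : y ≠ 0 := by rintro rfl; simp at h
    have h1 : 0 < y ^ 2 := by positivity
    have h2 : (1 : ℤ) ≤ y ^ 2 := h1
    exact_mod_cast h2

theorem even_of_bodd {y : ℤ} (h : Int.bodd y = false) : y % 2 = 0 := by
  have h2 := Int.bodd_add_div2 y
  rw [h] at h2
  simp only [cond_false] at h2
  omega

set_option maxHeartbeats 4000000 in
/-- The combinatorial core: a lattice vector of norm less than 4 is zero. -/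
theorem leech_key (c x : Fin 24 → ℤ) (hx : ∀ j, x j = ∑ i, c i * leechB i j)
    (h16 : (16 : ℤ) ∣ ∑ j, x j ^ 2) (hlt : ∑ j, x j ^ 2 < 32) : ∀ j, x j = 0 := by
  have hx' := hx
  simp only [Fin.forall_fin_succ, Fin.sum_univ_succ, leechB] at hx'
  simp at hx'
  obtain ⟨x0, x1, x2, x3, x4, x5, x6, x7, x8, x9, x10, x11, x12, x13, x14, x15, x16, x17, x18, x19, x20, x21, x22, x23⟩ := hx'
  have hpar : ∀ j, (x j - c 23) % 2 = 0 := by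
    have q0 : (x 0 - c 23) % 2 = 0 := by
      clear * - x0 x23
      omega
    have q1 : (x 1 - c 23) % 2 = 0 := by
      clear * - x1 x23
      omega
    have q2 : (x 2 - c 23) % 2 = 0 := by
      clear * - x2 x23
      omega
    have q3 : (x 3 - c 23) % 2 = 0 := by
      clear * - x3 x23
      omega
    have q4 : (x 4 - c 23) % 2 = 0 := by
      clear * - x4 x23
      omega
    have q5 : (x 5 - c 23) % 2 = 0 := by
      clear * - x5 x23
      omega
    have q6 : (x 6 - c 23) % 2 = 0 := by
      clear * - x6 x23
      omega
    have q7 : (x 7 - c 23) % 2 = 0 := by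
      clear * - x7 x23
      omega
    have q8 : (x 8 - c 23) % 2 = 0 := by
      clear * - x8 x23
      omega
    have q9 : (x 9 - c 23) % 2 = 0 := by
      clear * - x9 x23
      omega
    have q10 : (x 10 - c 23) % 2 = 0 := by
      clear * - x10 x23
      omega
    have q11 : (x 11 - c 23) % 2 = 0 := by
      clear * - x11 x23
      omega
    have q12 : (x 12 - c 23) % 2 = 0 := by
      clear * - x12 x23
      omega
    have q13 : (x 13 - c 23) % 2 = 0 := by
      clear * - x13 x23
      omega
    have q14 : (x 14 - c 23) % 2 = 0 := by
      clear * - x14 x23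
      omega
    have q15 : (x 15 - c 23) % 2 = 0 := by
      clear * - x15 x23
      omega
    have q16 : (x 16 - c 23) % 2 = 0 := by
      clear * - x16 x23
      omega
    have q17 : (x 17 - c 23) % 2 = 0 := by
      clear * - x17 x23
      omega
    have q18 : (x 18 - c 23) % 2 = 0 := by
      clear * - x18 x23
      omega
    have q19 : (x 19 - c 23) % 2 = 0 := by
      clear * - x19 x23
      omega
    have q20 : (x 20 - c 23) % 2 = 0 := by
      clear * - x20 x23
      omega
    have q21 : (x 21 - c 23) % 2 = 0 := by
      clear * - x21 x23
      omega
    have q22 : (x 22 - c 23) % 2 = 0 := by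
      clear * - x22 x23
      omega
    have q23 : (x 23 - c 23) % 2 = 0 := by
      clear * - x23 x23
      omega
    intro j
    fin_cases j
    exacts [q0, q1, q2, q3, q4, q5, q6, q7, q8, q9, q10, q11, q12, q13, q14, q15, q16, q17, q18, q19, q20, q21, q22, q23]
  rcases Int.emod_two_eq_zero_or_one (c 23) with h | h
  · obtain ⟨d, hd⟩ : ∃ d, c 23 = 2 * d := ⟨c 23 / 2, by clear * - h; omega⟩
    have hy : ∀ j, ∃ y, x j = 2 * y := fun j => ⟨x j / 2, by have h2 := hpar j; clear * - h2 h; omega⟩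
    choose y hy using hy
    have y0 : y 0 = 4 * c 0 + 2 * c 1 + 2 * c 2 + 2 * c 3 + 2 * c 4 + 2 * c 5 + 2 * c 6 + 2 * c 7 + 2 * c 8 + 2 * c 9 + 2 * c 10 + 2 * c 11 + c 12 + c 13 + c 17 + c 18 + c 19 + c 21 + (-3) * d := by
      have h := hy 0
      clear * - h x0 x23 hd
      omega
    have y1 : y 1 = 2 * c 1 + c 13 + c 16 + c 19 + c 20 + c 21 + c 22 + d := by
      have h := hy 1
      clear * - h x1 x23 hd
      omega
    have y2 : y 2 = 2 * c 2 + c 12 + c 13 + c 15 + c 17 + c 20 + c 22 + d := by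
      have h := hy 2
      clear * - h x2 x23 hd
      omega
    have y3 : y 3 = 2 * c 3 + c 13 + c 14 + c 16 + c 17 + c 18 + c 22 + d := by
      have h := hy 3
      clear * - h x3 x23 hd
      omega
    have y4 : y 4 = 2 * c 4 + c 12 + c 15 + c 16 + c 18 + c 19 + c 22 + d := by
      have h := hy 4
      clear * - h x4 x23 hd
      omega
    have y5 : y 5 = 2 * c 5 + c 12 + c 14 + c 15 + c 17 + c 18 + c 21 + c 22 + d := by
      have h := hy 5
      clear * - h x5 x23 hd
      omega
    have y6 : y 6 = 2 * c 6 + c 12 + c 13 + c 14 + c 16 + c 17 + c 20 + c 21 + d := by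
      have h := hy 6
      clear * - h x6 x23 hd
      omega
    have y7 : y 7 = 2 * c 7 + c 15 + c 16 + c 17 + c 18 + c 20 + c 21 + d := by
      have h := hy 7
      clear * - h x7 x23 hd
      omega
    have y8 : y 8 = 2 * c 8 + c 14 + c 15 + c 16 + c 17 + c 19 + c 20 + c 22 + d := by
      have h := hy 8
      clear * - h x8 x23 hd
      omega
    have y9 : y 9 = 2 * c 9 + c 13 + c 14 + c 15 + c 16 + c 18 + c 19 + c 21 + d := by
      have h := hy 9
      clear * - h x9 x23 hd
      omega
    have y10 : y 10 = 2 * c 10 + c 12 + c 14 + c 15 + c 19 + c 20 + c 21 + d := by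
      have h := hy 10
      clear * - h x10 x23 hd
      omega
    have y11 : y 11 = 2 * c 11 + c 12 + c 13 + c 14 + c 18 + c 19 + c 20 + c 22 + d := by
      have h := hy 11
      clear * - h x11 x23 hd
      omega
    have y12 : y 12 = c 12 + d := by
      have h := hy 12
      clear * - h x12 x23 hd
      omega
    have y13 : y 13 = c 13 + d := by
      have h := hy 13
      clear * - h x13 x23 hd
      omega
    have y14 : y 14 = c 14 + d := by
      have h := hy 14
      clear * - h x14 x23 hd
      omega
    have y15 : y 15 = c 15 + d := by
      have h := hy 15
      clear * - h x15 x23 hd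
      omega
    have y16 : y 16 = c 16 + d := by
      have h := hy 16
      clear * - h x16 x23 hd
      omega
    have y17 : y 17 = c 17 + d := by
      have h := hy 17
      clear * - h x17 x23 hd
      omega
    have y18 : y 18 = c 18 + d := by
      have h := hy 18
      clear * - h x18 x23 hd
      omega
    have y19 : y 19 = c 19 + d := by
      have h := hy 19
      clear * - h x19 x23 hd
      omega
    have y20 : y 20 = c 20 + d := by
      have h := hy 20
      clear * - h x20 x23 hd
      omega
    have y21 : y 21 = c 21 + d := by
      have h := hy 21
      clear * - h x21 x23 hd
      omega
    have y22 : y 22 = c 22 + d := by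
      have h := hy 22
      clear * - h x22 x23 hd
      omega
    have y23 : y 23 = d := by
      have h := hy 23
      clear * - h x23 x23 hd
      omega
    have hsy : ∑ j, x j ^ 2 = 4 * ∑ j, y j ^ 2 := by
      rw [Finset.mul_sum]; refine Finset.sum_congr rfl fun j _ => ?_
      rw [hy j]; ring
    have hwt : (golayWt (Int.bodd (c 12)) (Int.bodd (c 13)) (Int.bodd (c 14)) (Int.bodd (c 15)) (Int.bodd (c 16)) (Int.bodd (c 17)) (Int.bodd (c 18)) (Int.bodd (c 19)) (Int.bodd (c 20)) (Int.bodd (c 21)) (Int.bodd (c 22)) (Int.bodd (d)) : ℤ) = ∑ j, ((Int.bodd (y j)).toNat : ℤ) := by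
      simp only [Fin.sum_univ_succ, Fin.sum_univ_zero]
      have b2 : Int.bodd 2 = false := rfl
      have b3 : Int.bodd 3 = true := rfl
      have b4 : Int.bodd 4 = false := rfl
      simp [golayWt, b2, b3, b4, y0, y1, y2, y3, y4, y5, y6, y7, y8, y9, y10, y11, y12, y13, y14, y15, y16, y17, y18, y19, y20, y21, y22, y23]
      ring
    have hle : ∑ j, ((Int.bodd (y j)).toNat : ℤ) ≤ ∑ j, y j ^ 2 :=
      Finset.sum_le_sum fun j _ => bodd_le_sq (y j)
    rcases golay_min (Int.bodd (c 12)) (Int.bodd (c 13)) (Int.bodd (c 14)) (Int.bodd (c 15)) (Int.bodd (c 16)) (Int.bodd (c 17)) (Int.bodd (c 18)) (Int.bodd (c 19)) (Int.bodd (c 20)) (Int.bodd (c 21)) (Int.bodd (c 22)) (Int.bodd (d)) with hg | hg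
    · exfalso
      clear * - hg hle hwt hsy hlt
      omega
    · simp only [Bool.or_eq_false_iff, and_assoc] at hg
      obtain ⟨e0, e1, e2, e3, e4, e5, e6, e7, e8, e9, e10, e11⟩ := hg
      replace e0 := even_of_bodd e0
      replace e1 := even_of_bodd e1
      replace e2 := even_of_bodd e2
      replace e3 := even_of_bodd e3
      replace e4 := even_of_bodd e4
      replace e5 := even_of_bodd e5
      replace e6 := even_of_bodd e6
      replace e7 := even_of_bodd e7
      replace e8 := even_of_bodd e8
      replace e9 := even_of_bodd e9
      replace e10 := even_of_bodd e10
      replace e11 := even_of_bodd e11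
      have q0 : y 0 = 2 * (y 0 / 2) := by
        clear * - y0 e0 e1 e2 e3 e4 e5 e6 e7 e8 e9 e10 e11
        omega
      have q1 : y 1 = 2 * (y 1 / 2) := by
        clear * - y1 e0 e1 e2 e3 e4 e5 e6 e7 e8 e9 e10 e11
        omega
      have q2 : y 2 = 2 * (y 2 / 2) := by
        clear * - y2 e0 e1 e2 e3 e4 e5 e6 e7 e8 e9 e10 e11
        omega
      have q3 : y 3 = 2 * (y 3 / 2) := by
        clear * - y3 e0 e1 e2 e3 e4 e5 e6 e7 e8 e9 e10 e11
        omega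
      have q4 : y 4 = 2 * (y 4 / 2) := by
        clear * - y4 e0 e1 e2 e3 e4 e5 e6 e7 e8 e9 e10 e11
        omega
      have q5 : y 5 = 2 * (y 5 / 2) := by
        clear * - y5 e0 e1 e2 e3 e4 e5 e6 e7 e8 e9 e10 e11
        omega
      have q6 : y 6 = 2 * (y 6 / 2) := by
        clear * - y6 e0 e1 e2 e3 e4 e5 e6 e7 e8 e9 e10 e11
        omega
      have q7 : y 7 = 2 * (y 7 / 2) := by
        clear * - y7 e0 e1 e2 e3 e4 e5 e6 e7 e8 e9 e10 e11
        omega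
      have q8 : y 8 = 2 * (y 8 / 2) := by
        clear * - y8 e0 e1 e2 e3 e4 e5 e6 e7 e8 e9 e10 e11
        omega
      have q9 : y 9 = 2 * (y 9 / 2) := by
        clear * - y9 e0 e1 e2 e3 e4 e5 e6 e7 e8 e9 e10 e11
        omega
      have q10 : y 10 = 2 * (y 10 / 2) := by
        clear * - y10 e0 e1 e2 e3 e4 e5 e6 e7 e8 e9 e10 e11
        omega
      have q11 : y 11 = 2 * (y 11 / 2) := by
        clear * - y11 e0 e1 e2 e3 e4 e5 e6 e7 e8 e9 e10 e11
        omega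
      have q12 : y 12 = 2 * (y 12 / 2) := by
        clear * - y12 e0 e1 e2 e3 e4 e5 e6 e7 e8 e9 e10 e11
        omega
      have q13 : y 13 = 2 * (y 13 / 2) := by
        clear * - y13 e0 e1 e2 e3 e4 e5 e6 e7 e8 e9 e10 e11
        omega
      have q14 : y 14 = 2 * (y 14 / 2) := by
        clear * - y14 e0 e1 e2 e3 e4 e5 e6 e7 e8 e9 e10 e11
        omega
      have q15 : y 15 = 2 * (y 15 / 2) := by
        clear * - y15 e0 e1 e2 e3 e4 e5 e6 e7 e8 e9 e10 e11
        omega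
      have q16 : y 16 = 2 * (y 16 / 2) := by
        clear * - y16 e0 e1 e2 e3 e4 e5 e6 e7 e8 e9 e10 e11
        omega
      have q17 : y 17 = 2 * (y 17 / 2) := by
        clear * - y17 e0 e1 e2 e3 e4 e5 e6 e7 e8 e9 e10 e11
        omega
      have q18 : y 18 = 2 * (y 18 / 2) := by
        clear * - y18 e0 e1 e2 e3 e4 e5 e6 e7 e8 e9 e10 e11
        omega
      have q19 : y 19 = 2 * (y 19 / 2) := by
        clear * - y19 e0 e1 e2 e3 e4 e5 e6 e7 e8 e9 e10 e11
        omega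
      have q20 : y 20 = 2 * (y 20 / 2) := by
        clear * - y20 e0 e1 e2 e3 e4 e5 e6 e7 e8 e9 e10 e11
        omega
      have q21 : y 21 = 2 * (y 21 / 2) := by
        clear * - y21 e0 e1 e2 e3 e4 e5 e6 e7 e8 e9 e10 e11
        omega
      have q22 : y 22 = 2 * (y 22 / 2) := by
        clear * - y22 e0 e1 e2 e3 e4 e5 e6 e7 e8 e9 e10 e11
        omega
      have q23 : y 23 = 2 * (y 23 / 2) := by
        clear * - y23 e0 e1 e2 e3 e4 e5 e6 e7 e8 e9 e10 e11
        omega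
      have hz : ∀ j, ∃ z, y j = 2 * z := by
        intro j
        refine ⟨y j / 2, ?_⟩
        fin_cases j
        exacts [q0, q1, q2, q3, q4, q5, q6, q7, q8, q9, q10, q11, q12, q13, q14, q15, q16, q17, q18, q19, q20, q21, q22, q23]
      choose z hz using hz
      have hsz : ∑ j, y j ^ 2 = 4 * ∑ j, z j ^ 2 := by
        rw [Finset.mul_sum]; refine Finset.sum_congr rfl fun j _ => ?_
        rw [hz j]; ring
      have hsum : (∑ j, z j) % 2 = 0 := by
        have h1 : ∑ j, y j = 2 * ∑ j, z j := by
          rw [Finset.mul_sum]; exact Finset.sum_congr rfl fun j _ => hz j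
        have h2 : ∑ j, y j = 4 * (1 * c 0 + 1 * c 1 + 1 * c 2 + 1 * c 3 + 1 * c 4 + 1 * c 5 + 1 * c 6 + 1 * c 7 + 1 * c 8 + 1 * c 9 + 1 * c 10 + 1 * c 11 + 2 * c 12 + 2 * c 13 + 2 * c 14 + 2 * c 15 + 2 * c 16 + 2 * c 17 + 2 * c 18 + 2 * c 19 + 2 * c 20 + 2 * c 21 + 2 * c 22 + 5 * d) := by
          simp only [Fin.sum_univ_succ, Fin.sum_univ_zero]
          simp only [Fin.succ_zero_eq_one, Fin.succ_one_eq_two, Fin.reduceSucc, Fin.isValue,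
            y0, y1, y2, y3, y4, y5, y6, y7, y8, y9, y10, y11, y12, y13, y14, y15, y16, y17, y18, y19, y20, y21, y22, y23]
          ring
        clear * - h1 h2
        omega
      have hdiff : (2 : ℤ) ∣ ∑ j, (z j ^ 2 - z j) := by
        refine Finset.dvd_sum fun j _ => ?_
        have h2 := Int.even_mul_pred_self (z j)
        rw [show z j ^ 2 - z j = z j * (z j - 1) by ring]
        exact h2.two_dvd
      rw [Finset.sum_sub_distrib] at hdiff
      have hnn : 0 ≤ ∑ j, z j ^ 2 := Finset.sum_nonneg fun j _ => sq_nonneg _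
      have hz0 : ∑ j, z j ^ 2 = 0 := by
        clear * - hnn hdiff hsum hsz hsy hlt
        omega
      rw [Finset.sum_eq_zero_iff_of_nonneg fun j _ => sq_nonneg _] at hz0
      intro j
      have := hz0 j (Finset.mem_univ j)
      rw [hy, hz, pow_eq_zero_iff (by norm_num) |>.1 this]; rfl
  · exfalso
    have h1 : ∑ j : Fin 24, (1 : ℤ) ≤ ∑ j, x j ^ 2 := by
      refine Finset.sum_le_sum fun j _ => ?_
      have h0 : x j ≠ 0 := by have h2 := hpar j; clear * - h2 h; omega
      have h2 : 0 < x j ^ 2 := by positivity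
      omega
    simp at h1
    clear * - h1 h16 hlt
    omega

theorem leechB_det : (Matrix.of leechB).det = 2 ^ 36 := by
  rw [Matrix.det_of_isLowerTriangular]
  · decide +kernel
  · intro i j hij
    have : ∀ i j : Fin 24, i < j → leechB i j = 0 := by decide +kernel
    exact this i j hij

theorem leechB_gram : ∀ i j, (8 : ℤ) ∣ ∑ k, leechB i k * leechB j k := by
  decide +kernel

theorem leechB_even : ∀ i, (16 : ℤ) ∣ ∑ k, leechB i k * leechB i k := by
  decide +kernel

/-- The basis vectors of the Leech lattice. -/
def leechV (i : Fin 24) : EuclideanSpace ℝ (Fin 24) :=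
  WithLp.toLp 2 fun j => (leechB i j : ℝ) / √8

theorem leechV_inner (i j : Fin 24) :
    ⟪leechV i, leechV j⟫ = ((∑ k, leechB i k * leechB j k : ℤ) : ℝ) / 8 := by
  simp only [leechV, PiLp.inner_apply]
  push_cast
  rw [Finset.sum_div]
  refine Finset.sum_congr rfl fun k _ => ?_
  have h8 : (√8 : ℝ) * √8 = 8 := Real.mul_self_sqrt (by norm_num)
  simp only [RCLike.inner_apply, conj_trivial]
  rw [div_mul_div_comm, h8, mul_comm]

theorem leechV_matrix_det :
    (Matrix.of fun i j => leechV i j).det ^ 2 = 1 := by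
  have h : (Matrix.of fun i j => leechV i j) =
      (√8 : ℝ)⁻¹ • (Matrix.of leechB).map (Int.castRingHom ℝ) := by
    ext i j
    simp [leechV, div_eq_inv_mul]
  rw [h, Matrix.det_smul, ← RingHom.mapMatrix_apply, ← RingHom.map_det, leechB_det]
  have h8 : (√8 : ℝ) ^ 2 = 8 := Real.sq_sqrt (by norm_num)
  rw [mul_pow, ← pow_mul, Fintype.card_fin, inv_pow, mul_comm 24 2, pow_mul, h8]
  norm_num

theorem leechV_linInd : LinearIndependent ℝ leechV := by
  have h : LinearIndependent ℝ (Matrix.of fun i j => leechV i j).row := by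
    apply Matrix.linearIndependent_rows_of_det_ne_zero
    intro h
    have := leechV_matrix_det
    replace h : (Matrix.of fun i j => leechV i j).det = 0 := h
    rw [h] at this
    norm_num at this
  have h2 := h.map' (WithLp.linearEquiv 2 ℝ (Fin 24 → ℝ)).symm.toLinearMap
    (LinearEquiv.ker _)
  exact h2

/-- The real basis underlying the Leech lattice. -/
def leechBasis : Basis (Fin 24) ℝ (EuclideanSpace ℝ (Fin 24)) :=
  basisOfLinearIndependentOfCardEqFinrank leechV_linInd (by simp)

theorem leechBasis_apply (i) : leechBasis i = leechV i := by
  simp [leechBasis]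

theorem leechBasis_coe : (leechBasis : Fin 24 → _) = leechV := funext leechBasis_apply

/-- The Leech lattice. -/
def leechL : Submodule ℤ (EuclideanSpace ℝ (Fin 24)) :=
  Submodule.span ℤ (Set.range leechBasis)

theorem leechL_integral : IsIntegralLat leechL := by
  intro x hx y hy
  induction hx, hy using Submodule.span_induction₂ with
  | mem_mem x y hx hy =>
    obtain ⟨i, rfl⟩ := hx
    obtain ⟨j, rfl⟩ := hy
    obtain ⟨n, hn⟩ := leechB_gram i j
    refine ⟨n, ?_⟩
    rw [leechBasis_apply, leechBasis_apply, leechV_inner, hn]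
    push_cast; ring
  | zero_left y hy => exact ⟨0, by simp⟩
  | zero_right x hx => exact ⟨0, by simp⟩
  | add_left x y z _ _ _ h1 h2 =>
    obtain ⟨n, hn⟩ := h1
    obtain ⟨m, hm⟩ := h2
    exact ⟨n + m, by rw [inner_add_left, hn, hm]; push_cast; ring⟩
  | add_right x y z _ _ _ h1 h2 =>
    obtain ⟨n, hn⟩ := h1
    obtain ⟨m, hm⟩ := h2
    exact ⟨n + m, by rw [inner_add_right, hn, hm]; push_cast; ring⟩
  | smul_left r x y _ _ h1 =>
    obtain ⟨n, hn⟩ := h1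
    refine ⟨r * n, ?_⟩
    rw [← Int.cast_smul_eq_zsmul ℝ r x, real_inner_smul_left, hn]; push_cast; ring
  | smul_right r x y _ _ h1 =>
    obtain ⟨n, hn⟩ := h1
    refine ⟨r * n, ?_⟩
    rw [← Int.cast_smul_eq_zsmul ℝ r y, real_inner_smul_right, hn]; push_cast; ring

theorem leechL_even : IsEvenLat leechL := by
  refine ⟨leechL_integral, fun x hx => ?_⟩
  induction hx using Submodule.span_induction with
  | mem x hx =>
    obtain ⟨i, rfl⟩ := hx
    obtain ⟨n, hn⟩ := leechB_even i
    refine ⟨n, ?_⟩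
    rw [leechBasis_apply, leechV_inner, hn]
    push_cast; ring
  | zero => exact ⟨0, by simp⟩
  | add x y hx hy h1 h2 =>
    obtain ⟨n, hn⟩ := h1
    obtain ⟨m, hm⟩ := h2
    obtain ⟨k, hk⟩ := leechL_integral x hx y hy
    exact ⟨n + m + k, by rw [real_inner_add_add_self, hn, hm, hk]; push_cast; ring⟩
  | smul r x hx h1 =>
    obtain ⟨n, hn⟩ := h1
    refine ⟨r * r * n, ?_⟩
    rw [← Int.cast_smul_eq_zsmul ℝ r x, real_inner_smul_right, real_inner_smul_left, hn]
    push_cast; ring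

theorem leechL_unimod : IsUnimodularLat leechL := by
  refine ⟨24, leechBasis.restrictScalars ℤ, ?_⟩
  have h : (Matrix.of fun i j : Fin 24 =>
      ⟪((leechBasis.restrictScalars ℤ i : leechL) : EuclideanSpace ℝ (Fin 24)),
        ((leechBasis.restrictScalars ℤ j : leechL) : EuclideanSpace ℝ (Fin 24))⟫) =
      (Matrix.of fun i j => leechV i j) * (Matrix.of fun i j => leechV i j).transpose := by
    ext i j
    have hb : ∀ i, ((leechBasis.restrictScalars ℤ i : leechL) : EuclideanSpace ℝ (Fin 24)) =
        leechV i := fun i => by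
      rw [← leechBasis_apply]
      exact Basis.restrictScalars_apply ℤ leechBasis i
    rw [Matrix.of_apply, hb, hb, Matrix.mul_apply, PiLp.inner_apply]
    refine Finset.sum_congr rfl fun k _ => ?_
    simp [mul_comm]
  refine (congrArg Matrix.det h).trans ?_
  rw [Matrix.det_mul, Matrix.det_transpose, ← sq, leechV_matrix_det]

theorem leechL_min : ∀ x ∈ leechL, x ≠ 0 → 4 ≤ ⟪x, x⟫ := by
  intro x hx hx0
  by_contra hlt
  push Not at hlt
  obtain ⟨n, hn⟩ := leechL_even.2 x hx
  rw [leechL, Submodule.mem_span_range_iff_exists_fun] at hx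
  obtain ⟨c, rfl⟩ := hx
  set X : Fin 24 → ℤ := fun j => ∑ i, c i * leechB i j with hX
  have hcoord : ∀ j, (∑ i, c i • leechBasis i) j = (X j : ℝ) / √8 := by
    intro j
    simp [leechBasis_apply, leechV, hX, Finset.sum_div, mul_div_assoc]
  have h8 : (√8 : ℝ) * √8 = 8 := Real.mul_self_sqrt (by norm_num)
  have hnorm : ⟪∑ i, c i • leechBasis i, ∑ i, c i • leechBasis i⟫ =
      ((∑ j, X j ^ 2 : ℤ) : ℝ) / 8 := by
    rw [PiLp.inner_apply]
    push_cast
    rw [Finset.sum_div]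
    refine Finset.sum_congr rfl fun k _ => ?_
    rw [hcoord]
    simp only [RCLike.inner_apply, conj_trivial]
    rw [div_mul_div_comm, h8, sq]
  rw [hnorm] at hn hlt
  have h1 : ∑ j, X j ^ 2 = 16 * n := by
    have : ((∑ j, X j ^ 2 : ℤ) : ℝ) = ((16 * n : ℤ) : ℝ) := by
      push_cast at hn ⊢; linarith
    exact_mod_cast this
  have h2 : ∑ j, X j ^ 2 < 32 := by
    have : ((∑ j, X j ^ 2 : ℤ) : ℝ) < ((32 : ℤ) : ℝ) := by
      push_cast at hlt ⊢; linarith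
    exact_mod_cast this
  have h3 := leech_key c X (fun j => rfl) ⟨n, h1⟩ h2
  apply hx0
  ext j
  rw [hcoord, h3 j]
  simp

theorem leechL_isLat : IsLat leechL := by
  refine ⟨Submodule.fg_span (Set.finite_range _), ?_⟩
  rw [leechL, Submodule.span_span_of_tower]
  exact leechBasis.span_eq

theorem leechL_minNorm : minNorm leechL = 4 := by
  apply IsLeast.csInf_eq
  constructor
  · refine ⟨leechBasis 1, Submodule.subset_span ⟨1, rfl⟩, leechBasis.ne_zero 1, ?_⟩
    rw [leechBasis_apply, leechV_inner]
    have : ∑ k, leechB 1 k * leechB 1 k = 32 := by decide +kernel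
    rw [this]; norm_num
  · rintro r ⟨x, hx, hx0, rfl⟩
    exact leechL_min x hx hx0

/-- a Leech lattice exists: a rank 24 even unimodular lattice with
minimum norm 4. -/
theorem statement6 :
    ∃ L : Submodule ℤ (EuclideanSpace ℝ (Fin 24)),
      IsLat L ∧ IsEvenLat L ∧ IsUnimodularLat L ∧
      minNorm L = 4 ∧ ∀ x ∈ L, x ≠ 0 → 4 ≤ ⟪x, x⟫ := by
  exact ⟨leechL, leechL_isLat, leechL_even, leechL_unimod, leechL_minNorm, leechL_min⟩
end
end

section
/- Let E be an even unimodular lattice of rank 8 in an 8-dimensional real inner product space (an E8-lattice). Then E has an even polarization: there exist sublattices X, Y ⊆ E such that X + Y = E, X ∩ Y = 2E, and ⟪x,x⟫ ∈ 4ℤ for every x ∈ X and every x ∈ Y. -/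
noncomputable section

open scoped RealInnerProductSpace Pointwise
open Module

variable {V : Type*} [NormedAddCommGroup V] [InnerProductSpace ℝ V]

open Matrix


/-- binary block form -/
def blkq (t : ZMod 8) (z : ZMod 8 × ZMod 8) : ZMod 8 := t * z.1 ^ 2 + z.1 * z.2 + t * z.2 ^ 2

theorem eight0 : (8 : ZMod 8) = 0 := by decide

def thetaEquiv : ((ZMod 8 × ZMod 8) × (ZMod 8 × ZMod 8)) ≃ₗ[ZMod 8]
    ((ZMod 8 × ZMod 8) × (ZMod 8 × ZMod 8)) where
  toFun p := ((p.1.1 + p.2.1, (p.1.1 + p.2.1) + (p.1.2 + p.2.2) + p.1.2),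
    (p.1.2 + p.2.2, (p.1.2 + p.2.2) + p.1.1))
  invFun r := ((r.2.2 - r.2.1, r.1.2 - r.1.1 - r.2.1),
    (r.1.1 - (r.2.2 - r.2.1), r.2.1 - (r.1.2 - r.1.1 - r.2.1)))
  map_add' p q := by ext <;> simp <;> ring
  map_smul' c q := by ext <;> simp <;> ring
  left_inv p := by ext <;> simp <;> ring
  right_inv p := by ext <;> simp <;> ring

theorem carry (s t : ZMod 8) (hs : s = 0 ∨ s = 1) (ht : t = 0 ∨ t = 1) :
    ∃ r : ZMod 8, (r = 0 ∨ r = 1) ∧ (4 * s - 1) * (4 * t - 1) = -(4 * r - 1) ∧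
    ∃ θ : ((ZMod 8 × ZMod 8) × (ZMod 8 × ZMod 8)) ≃ₗ[ZMod 8]
      ((ZMod 8 × ZMod 8) × (ZMod 8 × ZMod 8)),
      ∀ p, 4 * (blkq s p.1 + blkq t p.2) = 4 * (blkq 0 (θ p).1 + blkq r (θ p).2) := by
  rcases hs with rfl | rfl <;> rcases ht with rfl | rfl
  · exact ⟨0, Or.inl rfl, by decide, LinearEquiv.refl _ _, fun p => rfl⟩
  · exact ⟨1, Or.inr rfl, by decide, LinearEquiv.refl _ _, fun p => rfl⟩
  · exact ⟨1, Or.inr rfl, by decide, LinearEquiv.prodComm _ _ _, fun p => by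
      simp [add_comm]⟩
  · refine ⟨0, Or.inl rfl, by decide, thetaEquiv, fun p => ?_⟩
    obtain ⟨⟨x, y⟩, ⟨z, w⟩⟩ := p
    simp only [blkq, thetaEquiv, LinearEquiv.coe_mk, LinearMap.coe_mk, AddHom.coe_mk]
    linear_combination (-(x*y+x*w+z*y+x*z+y*w)) * eight0

def shear1 : (ZMod 8 × ZMod 8) ≃ₗ[ZMod 8] (ZMod 8 × ZMod 8) where
  toFun p := (p.1, p.1 + p.2)
  invFun p := (p.1, p.2 - p.1)
  map_add' p q := by ext <;> simp <;> ring
  map_smul' c q := by ext <;> simp <;> ring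
  left_inv p := by ext <;> simp
  right_inv p := by ext <;> simp

theorem even_cases : ∀ p : ZMod 8, 4 * p = 0 → 2 * p = 0 ∨ 2 * p = 4 := by decide
theorem mulpq0 : ∀ p q : ZMod 8, 2 * p = 0 → 4 * q = 0 → p * q = 0 := by decide
theorem mulpq1 : ∀ p q : ZMod 8, 2 * p = 4 → 2 * q = 4 → p * q = 4 := by decide
theorem odd_facts : ∀ c : ZMod 8, 4 * c ≠ 0 → 4 * c = 4 ∧ c * c = 1 := by decide

theorem block (p q c : ZMod 8) (hp : 4 * p = 0) (hq : 4 * q = 0) (hc : 4 * c ≠ 0) :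
    ∃ s : ZMod 8, (s = 0 ∨ s = 1) ∧ p * q - c * c = 4 * s - 1 ∧
    ∃ θ : (ZMod 8 × ZMod 8) ≃ₗ[ZMod 8] (ZMod 8 × ZMod 8),
      ∀ z, 2 * (p * z.1 ^ 2 + 2 * c * z.1 * z.2 + q * z.2 ^ 2) = 4 * blkq s (θ z) := by
  obtain ⟨hc4, hcc⟩ := odd_facts c hc
  rcases even_cases p hp with hp2 | hp2 <;> rcases even_cases q hq with hq2 | hq2
  · refine ⟨0, Or.inl rfl, by rw [mulpq0 p q hp2 hq, hcc]; decide, LinearEquiv.refl _ _, ?_⟩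
    rintro ⟨x, y⟩
    simp only [blkq, LinearEquiv.refl_apply]
    linear_combination x ^ 2 * hp2 + x * y * hc4 + y ^ 2 * hq2
  · refine ⟨0, Or.inl rfl, by rw [mulpq0 p q hp2 hq, hcc]; decide,
      (LinearEquiv.prodComm _ _ _).trans shear1, ?_⟩
    rintro ⟨x, y⟩
    simp only [blkq, shear1, LinearEquiv.trans_apply, LinearEquiv.prodComm_apply, Prod.swap,
      LinearEquiv.coe_mk, LinearMap.coe_mk, AddHom.coe_mk]
    linear_combination x ^ 2 * hp2 + x * y * hc4 + y ^ 2 * hq2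
  · refine ⟨0, Or.inl rfl, by rw [mul_comm, mulpq0 q p hq2 hp, hcc]; decide,
      shear1, ?_⟩
    rintro ⟨x, y⟩
    simp only [blkq, shear1, LinearEquiv.coe_mk, LinearMap.coe_mk, AddHom.coe_mk]
    linear_combination x ^ 2 * hp2 + x * y * hc4 + y ^ 2 * hq2
  · refine ⟨1, Or.inr rfl, by rw [mulpq1 p q hp2 hq2, hcc]; decide, LinearEquiv.refl _ _, ?_⟩
    rintro ⟨x, y⟩
    simp only [blkq, LinearEquiv.refl_apply]
    linear_combination x ^ 2 * hp2 + x * y * hc4 + y ^ 2 * hq2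

/-- nondegenerate even symmetric matrices mod 8 -/
structure EvenForm {ι : Type} [Fintype ι] [DecidableEq ι] (G : Matrix ι ι (ZMod 8)) : Prop where
  symm : ∀ i j, G i j = G j i
  even : ∀ i, 4 * G i i = 0
  unit : IsUnit G.det

theorem EvenForm.submatrix {ι κ : Type} [Fintype ι] [DecidableEq ι] [Fintype κ] [DecidableEq κ]
    {G : Matrix ι ι (ZMod 8)} (h : EvenForm G) (e : κ ≃ ι) : EvenForm (G.submatrix e e) :=
  ⟨fun _ _ => h.symm _ _, fun _ => h.even _, by rw [det_submatrix_equiv_self]; exact h.unit⟩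

/-- the quadratic form -/
def qf {ι : Type} [Fintype ι] (G : Matrix ι ι (ZMod 8)) (x : ι → ZMod 8) : ZMod 8 :=
  x ⬝ᵥ G *ᵥ x

theorem EvenForm.exists_odd {ι : Type} [Fintype ι] [DecidableEq ι]
    {G : Matrix ι ι (ZMod 8)} (h : EvenForm G) (i : ι) : ∃ j, 4 * G i j ≠ 0 := by
  by_contra! hc
  have h1 : (G.updateRow i ((4 : ZMod 8) • G i)).det = 4 * G.det := by
    rw [det_updateRow_smul, updateRow_eq_self]
  rw [det_eq_zero_of_row_eq_zero i (by intro j; simp [hc j])] at h1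
  have h2 := h.unit.mul_left_eq_zero.1 h1.symm
  revert h2; decide

theorem split_sum {κ : Type} [Fintype κ] [DecidableEq κ]
    (G : Matrix (Fin 2 ⊕ κ) (Fin 2 ⊕ κ) (ZMod 8)) (h : EvenForm G)
    (hc : 4 * G (Sum.inl 0) (Sum.inl 1) ≠ 0) :
    ∃ s : ZMod 8, (s = 0 ∨ s = 1) ∧ ∃ S : Matrix κ κ (ZMod 8), EvenForm S ∧
      G.det = (4 * s - 1) * S.det ∧
      ∃ Ψ : (Fin 2 ⊕ κ → ZMod 8) ≃ₗ[ZMod 8] (ZMod 8 × ZMod 8) × (κ → ZMod 8),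
        ∀ x, 2 * qf G x = 4 * blkq s (Ψ x).1 + 2 * qf S (Ψ x).2 := by
  obtain ⟨s, hs, hdet, θ, hθ⟩ := block _ _ _ (h.even (Sum.inl 0)) (h.even (Sum.inl 1)) hc
  set A := G.toBlocks₁₁ with hA
  set B := G.toBlocks₁₂ with hB
  set D := G.toBlocks₂₂ with hD
  have hC : G.toBlocks₂₁ = Bᵀ := by ext i j; exact h.symm _ _
  have hG : G = fromBlocks A B Bᵀ D := by rw [← hC]; exact (fromBlocks_toBlocks G).symm
  have hAt : Aᵀ = A := by ext i j; exact h.symm _ _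
  have hDt : Dᵀ = D := by ext i j; exact h.symm _ _
  have hAdet : A.det = 4 * s - 1 := by
    rw [← hdet, det_fin_two]
    simp only [hA, toBlocks₁₁, of_apply]
    rw [h.symm (Sum.inl 1) (Sum.inl 0)]
  have hAu : IsUnit A.det := by
    rw [hAdet]; rcases hs with rfl | rfl <;> decide
  let L := A⁻¹ * B
  have hAL : A * L = B := by rw [← Matrix.mul_assoc, mul_nonsing_inv _ hAu, Matrix.one_mul]
  have hBt : Bᵀ = Lᵀ * A := by rw [← hAL, transpose_mul, hAt]
  haveI : Invertible A := invertibleOfIsUnitDet A hAu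
  let S := D - Bᵀ * L
  have hdetG : G.det = (4 * s - 1) * S.det := by
    rw [hG, det_fromBlocks₁₁, hAdet, invOf_eq_nonsing_inv, Matrix.mul_assoc]
  have hS : EvenForm S := by
    refine ⟨?_, ?_, ?_⟩
    · have : Sᵀ = S := by
        simp only [S, transpose_sub, transpose_mul, hDt, transpose_transpose]
        rw [hBt, ← hAL, Matrix.mul_assoc]
      intro i j
      exact congrFun (congrFun this j) i
    · intro k
      have e1 : 4 * D k k = 0 := h.even (Sum.inr k)
      have e2 : 4 * A 0 0 = 0 := h.even (Sum.inl 0)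
      have e3 : 4 * A 1 1 = 0 := h.even (Sum.inl 1)
      have e4 : A 1 0 = A 0 1 := h.symm _ _
      simp only [S, hBt, Matrix.sub_apply, mul_apply, Fin.sum_univ_two, transpose_apply, e4]
      linear_combination e1 - L 0 k * L 0 k * e2 - L 1 k * L 1 k * e3 - L 0 k * L 1 k * A 0 1 * eight0
    · exact isUnit_of_mul_isUnit_right (hdetG ▸ h.unit)
  let Ψ0 : (Fin 2 ⊕ κ → ZMod 8) ≃ₗ[ZMod 8] (ZMod 8 × ZMod 8) × (κ → ZMod 8) :=
    { toFun := fun x => ((x (Sum.inl 0) + (L *ᵥ (x ∘ Sum.inr)) 0,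
        x (Sum.inl 1) + (L *ᵥ (x ∘ Sum.inr)) 1), x ∘ Sum.inr)
      invFun := fun z => Sum.elim ![z.1.1 - (L *ᵥ z.2) 0, z.1.2 - (L *ᵥ z.2) 1] z.2
      map_add' := by
        intro x y
        have : (x + y) ∘ Sum.inr = x ∘ (Sum.inr : κ → Fin 2 ⊕ κ) + y ∘ Sum.inr := rfl
        simp only [this, mulVec_add]
        ext <;> simp <;> ring
      map_smul' := by
        intro c x
        have : (c • x) ∘ Sum.inr = c • (x ∘ (Sum.inr : κ → Fin 2 ⊕ κ)) := rfl
        simp only [this, mulVec_smul]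
        ext <;> simp <;> ring
      left_inv := by
        intro x
        ext i
        rcases i with i | i
        · fin_cases i <;> simp
        · simp
      right_inv := by
        rintro ⟨⟨a, b⟩, y⟩
        simp }
  refine ⟨s, hs, S, hS, hdetG, Ψ0.trans (LinearEquiv.prodCongr θ (LinearEquiv.refl _ _)), ?_⟩
  intro x
  let y : κ → ZMod 8 := x ∘ Sum.inr
  let u : Fin 2 → ZMod 8 := x ∘ Sum.inl
  have hx : x = Sum.elim u y := by ext i; rcases i with i | i <;> rfl
  have key : qf G x = (u + L *ᵥ y) ⬝ᵥ A *ᵥ (u + L *ᵥ y) + qf S y := by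
    have t1 : ∀ w : Fin 2 → ZMod 8, (L *ᵥ y) ⬝ᵥ A *ᵥ w = y ⬝ᵥ Bᵀ *ᵥ w := by
      intro w
      rw [hBt, ← mulVec_mulVec w Lᵀ A, dotProduct_mulVec y Lᵀ, vecMul_transpose]
    have t2 : A *ᵥ (L *ᵥ y) = B *ᵥ y := by rw [mulVec_mulVec, hAL]
    have t3 : (L *ᵥ y) ⬝ᵥ B *ᵥ y = y ⬝ᵥ Bᵀ *ᵥ (L *ᵥ y) := by rw [← t1, t2]
    simp only [qf]
    rw [hG, hx, fromBlocks_mulVec]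
    simp only [S, sumElim_dotProduct_sumElim, sub_mulVec, mulVec_add, add_dotProduct,
      dotProduct_add, dotProduct_sub, t1, t2, ← mulVec_mulVec, Sum.elim_comp_inl, Sum.elim_comp_inr]
    linear_combination -t3
  rw [key, mul_add]
  congr 1
  have := hθ (Ψ0 x).1
  simp only [LinearEquiv.trans_apply, LinearEquiv.prodCongr_apply]
  rw [← this]
  have e4 : A 1 0 = A 0 1 := h.symm _ _
  simp only [dotProduct, mulVec, Fin.sum_univ_two, e4]
  change _ = 2 * (A 0 0 * (u 0 + (L *ᵥ y) 0) ^ 2 + 2 * A 0 1 * (u 0 + (L *ᵥ y) 0) * (u 1 + (L *ᵥ y) 1) + A 1 1 * (u 1 + (L *ᵥ y) 1)^2)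
  simp only [Pi.add_apply, mulVec, dotProduct]
  ring

theorem split {ι : Type} [Fintype ι] [DecidableEq ι] [Nonempty ι]
    (G : Matrix ι ι (ZMod 8)) (h : EvenForm G) :
    ∃ s : ZMod 8, (s = 0 ∨ s = 1) ∧ ∃ (κ : Type) (_ : Fintype κ) (_ : DecidableEq κ)
      (S : Matrix κ κ (ZMod 8)), Fintype.card ι = Fintype.card κ + 2 ∧ EvenForm S ∧
      G.det = (4 * s - 1) * S.det ∧
      ∃ Ψ : (ι → ZMod 8) ≃ₗ[ZMod 8] (ZMod 8 × ZMod 8) × (κ → ZMod 8),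
        ∀ x, 2 * qf G x = 4 * blkq s (Ψ x).1 + 2 * qf S (Ψ x).2 := by
  classical
  obtain ⟨i⟩ := ‹Nonempty ι›
  obtain ⟨j, hj⟩ := h.exists_odd i
  have hij : i ≠ j := by rintro rfl; exact hj (h.even _)
  let f : Fin 2 → ι := ![i, j]
  have hf : Function.Injective f := by
    intro a b hab
    fin_cases a <;> fin_cases b <;> simp_all [f]
  let e : Fin 2 ⊕ ((Set.range f)ᶜ : Set ι) ≃ ι :=
    ((Equiv.ofInjective f hf).sumCongr (Equiv.refl _)).trans (Equiv.Set.sumCompl (Set.range f))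
  have e0 : e (Sum.inl 0) = i := by simp [e, f]
  have e1 : e (Sum.inl 1) = j := by simp [e, f]
  obtain ⟨s, hs, S, hS, hd, Ψ, hΨ⟩ := split_sum (G.submatrix e e) (h.submatrix e)
    (by rw [submatrix_apply, e0, e1]; exact hj)
  refine ⟨s, hs, _, inferInstance, inferInstance, S, ?_, hS, ?_,
    (LinearEquiv.funCongrLeft (ZMod 8) (ZMod 8) e).trans Ψ, ?_⟩
  · rw [← Fintype.card_congr e, Fintype.card_sum, Fintype.card_fin, add_comm]
  · rw [← hd, det_submatrix_equiv_self]
  · intro x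
    rw [LinearEquiv.trans_apply, ← hΨ]
    congr 1
    simp only [qf, dotProduct, mulVec, LinearEquiv.funCongrLeft_apply, LinearMap.funLeft_apply, submatrix_apply]
    rw [← e.sum_comp]
    refine Finset.sum_congr rfl fun a _ => ?_
    rw [← e.sum_comp]

theorem main8 (k : ℕ) : ∀ {ι : Type} [Fintype ι] [DecidableEq ι]
    (G : Matrix ι ι (ZMod 8)) (_ : EvenForm G) (_ : Fintype.card ι = 2 * (k + 1)),
    ∃ t : ZMod 8, (t = 0 ∨ t = 1) ∧ G.det = (-1) ^ k * (4 * t - 1) ∧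
      ∃ Ψ : (ι → ZMod 8) ≃ₗ[ZMod 8] (Fin k → ZMod 8 × ZMod 8) × (ZMod 8 × ZMod 8),
        ∀ x, 2 * qf G x = 4 * (∑ i, blkq 0 ((Ψ x).1 i) + blkq t (Ψ x).2) := by
  induction k with
  | zero =>
    intro ι _ _ G h hcard
    haveI : Nonempty ι := Fintype.card_pos_iff.1 (by omega)
    obtain ⟨s, hs, κ, _, _, S, hk, hS, hd, Ψ, hΨ⟩ := split G h
    haveI : IsEmpty κ := Fintype.card_eq_zero_iff.1 (by omega)
    refine ⟨s, hs, by rw [hd]; simp, Ψ.trans ((LinearEquiv.prodComm _ _ _).trans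
      (LinearEquiv.prodCongr (LinearEquiv.ofSubsingleton _ _) (LinearEquiv.refl _ _))), ?_⟩
    intro x
    rw [hΨ]
    simp [qf]
  | succ k ih =>
    intro ι _ _ G h hcard
    haveI : Nonempty ι := Fintype.card_pos_iff.1 (by omega)
    obtain ⟨s, hs, κ, _, _, S, hk, hS, hd, Ψ, hΨ⟩ := split G h
    obtain ⟨t, ht, hdt, Φ, hΦ⟩ := ih S hS (by omega)
    obtain ⟨r, hr, hdr, θ, hθ⟩ := carry s t hs ht
    let a1 := Ψ.trans (LinearEquiv.prodCongr (LinearEquiv.refl _ _) Φ)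
    let reas : ((ZMod 8 × ZMod 8) × (Fin k → ZMod 8 × ZMod 8) × (ZMod 8 × ZMod 8)) ≃ₗ[ZMod 8]
        (Fin (k+1) → ZMod 8 × ZMod 8) × (ZMod 8 × ZMod 8) :=
      { toFun := fun z => (Fin.cons (θ (z.1, z.2.2)).1 z.2.1, (θ (z.1, z.2.2)).2)
        invFun := fun w => ((θ.symm (w.1 0, w.2)).1, Fin.tail w.1, (θ.symm (w.1 0, w.2)).2)
        map_add' := by
          intro x y
          have : (x.1 + y.1, x.2.2 + y.2.2) = (x.1, x.2.2) + (y.1, y.2.2) := rfl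
          simp only [Prod.fst_add, Prod.snd_add, this, map_add]
          refine Prod.ext ?_ rfl
          funext i
          refine Fin.cases ?_ (fun i => ?_) i <;> rfl
        map_smul' := by
          intro c x
          have : (c • x.1, c • x.2.2) = c • (x.1, x.2.2) := rfl
          simp only [Prod.smul_fst, Prod.smul_snd, this, map_smul]
          refine Prod.ext ?_ rfl
          funext i
          refine Fin.cases ?_ (fun i => ?_) i <;> rfl
        left_inv := by intro z; simp
        right_inv := by intro z; simp }
    refine ⟨r, hr, ?_, a1.trans reas, ?_⟩
    · rw [hd, hdt, pow_succ]
      linear_combination (-1) ^ k * hdr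
    · intro x
      rw [hΨ, hΦ, Fin.sum_univ_succ]
      have := hθ ((Ψ x).1, (Φ (Ψ x).2).2)
      have r1 : (a1.trans reas) x = (Fin.cons (θ ((Ψ x).1, (Φ (Ψ x).2).2)).1 (Φ (Ψ x).2).1,
        (θ ((Ψ x).1, (Φ (Ψ x).2).2)).2) := rfl
      rw [r1]
      simp only [Fin.cons_zero, Fin.cons_succ]
      linear_combination this

theorem final8 (G : Matrix (Fin 8) (Fin 8) (ZMod 8)) (h : EvenForm G) (hd : G.det = 1) :
    ∃ Ψ : (Fin 8 → ZMod 8) ≃ₗ[ZMod 8] (Fin 3 → ZMod 8 × ZMod 8) × (ZMod 8 × ZMod 8),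
        ∀ x, 2 * qf G x = 4 * (∑ i, ((Ψ x).1 i).1 * ((Ψ x).1 i).2 + (Ψ x).2.1 * (Ψ x).2.2) := by
  obtain ⟨t, ht, hdt, Ψ, hΨ⟩ := main8 3 G h (by simp)
  have : t = 0 := by
    rcases ht with rfl | rfl
    · rfl
    · rw [hd] at hdt; revert hdt; decide
  subst this
  refine ⟨Ψ, fun x => ?_⟩
  rw [hΨ]
  simp [blkq]

theorem four_dvd_of (N : ℤ) (h : 2 * (N : ZMod 8) = 0) : ∃ n : ℤ, N = 4 * n := by
  have h' : ((2 * N : ℤ) : ZMod 8) = 0 := by push_cast; exact h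
  rw [ZMod.intCast_zmod_eq_zero_iff_dvd] at h'
  obtain ⟨k, hk⟩ := h'
  exact ⟨k, by push_cast at hk; omega⟩

theorem two_dvd_of (N : ℤ) (h : 4 * (N : ZMod 8) = 0) : ∃ n : ℤ, N = 2 * n := by
  have h' : ((4 * N : ℤ) : ZMod 8) = 0 := by push_cast; exact h
  rw [ZMod.intCast_zmod_eq_zero_iff_dvd] at h'
  obtain ⟨k, hk⟩ := h'
  exact ⟨k, by push_cast at hk; omega⟩

abbrev Tgt := (Fin 3 → ZMod 8 × ZMod 8) × (ZMod 8 × ZMod 8)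

def subX {M : Type*} [AddCommGroup M] (f : M →ₗ[ℤ] Tgt) : Submodule ℤ M where
  carrier := {x | (∀ i, 4 * ((f x).1 i).1 = 0) ∧ 4 * (f x).2.1 = 0}
  zero_mem' := by simp
  add_mem' := by
    intro a b ha hb
    simp only [Set.mem_ofPred_eq, map_add, Prod.fst_add, Prod.snd_add, Pi.add_apply, mul_add] at *
    exact ⟨fun i => by rw [ha.1 i, hb.1 i, add_zero], by rw [ha.2, hb.2, add_zero]⟩
  smul_mem' := by
    intro c a ha
    simp only [Set.mem_ofPred_eq, map_smul, Prod.smul_fst, Prod.smul_snd, Pi.smul_apply,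
      mul_smul_comm] at *
    exact ⟨fun i => by rw [ha.1 i, smul_zero], by rw [ha.2, smul_zero]⟩

def subY {M : Type*} [AddCommGroup M] (f : M →ₗ[ℤ] Tgt) : Submodule ℤ M where
  carrier := {x | (∀ i, 4 * ((f x).1 i).2 = 0) ∧ 4 * (f x).2.2 = 0}
  zero_mem' := by simp
  add_mem' := by
    intro a b ha hb
    simp only [Set.mem_ofPred_eq, map_add, Prod.fst_add, Prod.snd_add, Pi.add_apply, mul_add] at *
    exact ⟨fun i => by rw [ha.1 i, hb.1 i, add_zero], by rw [ha.2, hb.2, add_zero]⟩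
  smul_mem' := by
    intro c a ha
    simp only [Set.mem_ofPred_eq, map_smul, Prod.smul_fst, Prod.smul_snd, Pi.smul_apply,
      mul_smul_comm] at *
    exact ⟨fun i => by rw [ha.1 i, smul_zero], by rw [ha.2, smul_zero]⟩

theorem rank_eq (E : Submodule ℤ V) (hE : IsLat E) (n : ℕ) (b : Basis (Fin n) ℤ E)
    (hb : (Matrix.of fun i j : Fin n => ⟪(b i : V), (b j : V)⟫).det = 1) :
    finrank ℝ V = n := by
  have hli : LinearIndependent ℝ (fun i => (b i : V)) := by
    rw [Fintype.linearIndependent_iff]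
    intro g hg
    have : g = 0 := by
      refine Matrix.eq_zero_of_mulVec_eq_zero (M := Matrix.of fun i j : Fin n => ⟪(b i : V), (b j : V)⟫)
        (by rw [hb]; exact one_ne_zero) ?_
      funext i
      have h1 : ⟪(b i : V), ∑ j, g j • (b j : V)⟫ = 0 := by rw [hg, inner_zero_right]
      rw [inner_sum] at h1
      simp only [inner_smul_right] at h1
      simp only [mulVec, dotProduct, of_apply, Pi.zero_apply]
      rw [← h1]
      exact Finset.sum_congr rfl fun j _ => mul_comm _ _
    intro i
    rw [this]; rfl
  have hsp : ⊤ ≤ Submodule.span ℝ (Set.range fun i => (b i : V)) := by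
    rw [← hE.2, Submodule.span_le]
    intro x hx
    have h1 := b.sum_repr ⟨x, hx⟩
    have h2 : x = ∑ i, (b.repr ⟨x, hx⟩ i) • (b i : V) := by
      have := congrArg E.subtype h1
      rw [map_sum] at this
      exact this.symm
    rw [h2]
    refine Submodule.sum_mem _ fun i _ => ?_
    rw [← Int.cast_smul_eq_zsmul ℝ]
    exact Submodule.smul_mem _ _ (Submodule.subset_span ⟨i, rfl⟩)
  rw [finrank_eq_card_basis (Basis.mk hli hsp), Fintype.card_fin]

/-- an `E8`-lattice has an even polarization: sublattices `X, Y` with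
`X + Y = E`, `X ∩ Y = 2E` and all norms of elements of `X` and of `Y` in `4ℤ`. -/
theorem statement7 [FiniteDimensional ℝ V] (hdim : finrank ℝ V = 8)
    (E : Submodule ℤ V) (hE : IsLat E) (hEeven : IsEvenLat E) (hEuni : IsUnimodularLat E) :
    ∃ X Y : Submodule ℤ V, X ≤ E ∧ Y ≤ E ∧ X ⊔ Y = E ∧ X ⊓ Y = (2 : ℤ) • E ∧
      (∀ x ∈ X, ∃ n : ℤ, ⟪x, x⟫ = 4 * (n : ℝ)) ∧
      (∀ y ∈ Y, ∃ n : ℤ, ⟪y, y⟫ = 4 * (n : ℝ)) := by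
  obtain ⟨n, b, hb⟩ := hEuni
  have hn := rank_eq E hE n b hb
  rw [hdim] at hn
  subst hn
  choose g hg using fun i j : Fin 8 => hEeven.1 (b i) (b i).2 (b j) (b j).2
  have hgdet : (Matrix.of g).det = 1 := by
    have h1 : (Matrix.of fun i j : Fin 8 => ⟪(b i : V), (b j : V)⟫)
        = (Int.castRingHom ℝ).mapMatrix (Matrix.of g) := by
      ext i j; simp [hg]
    rw [h1, ← RingHom.map_det] at hb
    have h2 : (((Matrix.of g).det : ℤ) : ℝ) = 1 := hb
    exact_mod_cast h2
  let G : Matrix (Fin 8) (Fin 8) (ZMod 8) := (Int.castRingHom (ZMod 8)).mapMatrix (Matrix.of g)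
  have hGdet : G.det = 1 := by
    simp only [G]
    rw [← RingHom.map_det, hgdet, map_one]
  have hG : EvenForm G := by
    refine ⟨fun i j => ?_, fun i => ?_, by rw [hGdet]; exact isUnit_one⟩
    · have h1 : g i j = g j i := by
        have h2 : ((g i j : ℤ) : ℝ) = g j i := by rw [← hg, ← hg, real_inner_comm]
        exact_mod_cast h2
      change ((g i j : ℤ) : ZMod 8) = (g j i : ℤ)
      rw [h1]
    · obtain ⟨m, hm⟩ := hEeven.2 (b i) (b i).2
      have h1 : g i i = 2 * m := by
        rw [hg] at hm
        exact_mod_cast hm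
      change 4 * ((g i i : ℤ) : ZMod 8) = 0
      rw [h1]
      push_cast
      linear_combination (m : ZMod 8) * eight0
  obtain ⟨Ψ, hΨ⟩ := final8 G hG hGdet
  let ρ : E →ₗ[ℤ] (Fin 8 → ZMod 8) :=
    { toFun := fun x i => ((b.repr x i : ℤ) : ZMod 8)
      map_add' := by intro x y; ext i; simp
      map_smul' := by intro c x; ext i; simp }
  let f : E →ₗ[ℤ] Tgt := (Ψ.toLinearMap.restrictScalars ℤ).comp ρ
  have hf : ∀ x, f x = Ψ (ρ x) := fun x => rfl
  have hfsurj : Function.Surjective f := by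
    intro z
    choose v hv using fun i => ZMod.intCast_surjective (Ψ.symm z i)
    refine ⟨b.equivFun.symm v, ?_⟩
    have : ρ (b.equivFun.symm v) = Ψ.symm z := by
      funext i
      rw [← hv i]
      change ((b.equivFun (b.equivFun.symm v) i : ℤ) : ZMod 8) = _
      rw [LinearEquiv.apply_symm_apply]
    rw [hf, this, LinearEquiv.apply_symm_apply]
  have hnorm : ∀ x : E, ∃ N : ℤ, ⟪(x : V), (x : V)⟫ = (N : ℝ) ∧ (N : ZMod 8) = qf G (ρ x) := by
    intro x
    refine ⟨∑ i, ∑ j, b.repr x i * (g i j * b.repr x j), ?_, ?_⟩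
    · have h2 : (x : V) = ∑ i, ((b.repr x i : ℤ) : ℝ) • (b i : V) := by
        have := congrArg E.subtype (b.sum_repr x)
        rw [map_sum] at this
        simp only [Int.cast_smul_eq_zsmul]
        exact this.symm
      conv_lhs => rw [h2]
      push_cast
      rw [sum_inner]
      refine Finset.sum_congr rfl fun i _ => ?_
      rw [inner_sum]
      refine Finset.sum_congr rfl fun j _ => ?_
      rw [real_inner_smul_left, real_inner_smul_right, hg]
      ring
    · simp only [qf, dotProduct, mulVec, Finset.mul_sum]
      push_cast
      rfl
  have hfin : ∀ x : E, (∀ i, 4 * (((f x).1 i).1 * ((f x).1 i).2) = 0) →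
      4 * ((f x).2.1 * (f x).2.2) = 0 → ∃ n : ℤ, ⟪(x : V), (x : V)⟫ = 4 * (n : ℝ) := by
    intro x h1 h2
    obtain ⟨N, hN, hN8⟩ := hnorm x
    have h3 : 2 * (N : ZMod 8) = 0 := by
      rw [hN8, hΨ, ← hf, mul_add, Finset.mul_sum, h2, Finset.sum_eq_zero fun i _ => h1 i, add_zero]
    obtain ⟨k, hk⟩ := four_dvd_of N h3
    exact ⟨k, by rw [hN, hk]; push_cast; ring⟩
  refine ⟨(subX f).map E.subtype, (subY f).map E.subtype, Submodule.map_subtype_le _ _,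
    Submodule.map_subtype_le _ _, ?_, ?_, ?_, ?_⟩
  · have htop : subX f ⊔ subY f = ⊤ := by
      rw [eq_top_iff]
      intro x _
      obtain ⟨x0, hx0⟩ := hfsurj ((fun i => (0, ((f x).1 i).2)), (0, (f x).2.2))
      have h1 : x0 ∈ subX f := by
        refine ⟨fun i => ?_, ?_⟩ <;> rw [hx0] <;> simp
      have h2 : x - x0 ∈ subY f := by
        refine ⟨fun i => ?_, ?_⟩ <;> rw [map_sub, hx0] <;> simp
      have h3 := Submodule.add_mem_sup h1 h2
      rwa [add_sub_cancel] at h3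
    rw [← Submodule.map_sup, htop, Submodule.map_subtype_top]
  · rw [← Submodule.map_inf _ E.injective_subtype]
    ext v
    rw [Submodule.mem_smul_pointwise_iff_exists]
    constructor
    · rintro ⟨x, ⟨hx, hy⟩, rfl⟩
      have h1 : (4 : ZMod 8) • f x = 0 := by
        refine Prod.ext (funext fun i => Prod.ext ?_ ?_) (Prod.ext ?_ ?_)
        · exact hx.1 i
        · exact hy.1 i
        · exact hx.2
        · exact hy.2
      have h2 : (4 : ZMod 8) • ρ x = 0 := by
        rw [hf, ← map_smul] at h1
        exact (LinearEquiv.map_eq_zero_iff _).1 h1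
      choose r hr using fun i => two_dvd_of (b.repr x i) (congrFun h2 i)
      refine ⟨b.equivFun.symm r, Subtype.property _, ?_⟩
      have h3 : x = (2 : ℤ) • b.equivFun.symm r := by
        apply b.equivFun.injective
        rw [map_smul, LinearEquiv.apply_symm_apply]
        funext i
        simpa using hr i
      conv_rhs => rw [h3]
      rfl
    · rintro ⟨y, hy, rfl⟩
      refine ⟨(2 : ℤ) • ⟨y, hy⟩, ?_, rfl⟩
      have h8 : ∀ z : ZMod 8, 4 * ((2 : ℤ) • z) = 0 := by decide
      refine ⟨⟨fun i => ?_, ?_⟩, ⟨fun i => ?_, ?_⟩⟩ <;> rw [map_smul] <;> exact h8 _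
  · rintro _ ⟨x, hx, rfl⟩
    refine hfin x (fun i => ?_) ?_
    · rw [← mul_assoc, hx.1 i, zero_mul]
    · rw [← mul_assoc, hx.2, zero_mul]
  · rintro _ ⟨x, hx, rfl⟩
    refine hfin x (fun i => ?_) ?_
    · rw [mul_left_comm, hx.1 i, mul_zero]
    · rw [mul_left_comm, hx.2, mul_zero]
end
end

section
/- Let V be a 24-dimensional real inner product space, Υ a lattice in V such that √2·Υ is even and unimodular, and M, N a polarization of Υ in which M and N are both even unimodular lattices (Niemeier lattices). Then: (i) μ(L(M,N,3)) ≥ 4; and (ii) if μ(M) = 2, then μ(L(M,N,3)) = 4. -/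
noncomputable section

open scoped RealInnerProductSpace Pointwise
open Module

variable {V : Type*} [NormedAddCommGroup V] [InnerProductSpace ℝ V]

theorem even_ge_two {M : Submodule ℤ V} (hM : IsEvenLat M) {x : V} (hx : x ∈ M) (h0 : x ≠ 0) :
    2 ≤ ⟪x, x⟫ := by
  obtain ⟨n, hn⟩ := hM.2 x hx
  have hp : 0 < ⟪x, x⟫ := real_inner_self_pos.2 h0
  have : (0 : ℝ) < n := by linarith
  have h1 : 0 < n := by exact_mod_cast this
  have h2 : (1 : ℝ) ≤ n := by exact_mod_cast h1
  linarith

theorem two_smul_ge_four {Υ : Submodule ℤ V} (hΥ : ∀ x ∈ Υ, ∃ n : ℤ, ⟪x, x⟫ = (n : ℝ)) {x : V}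
    (hx : x ∈ (2 : ℤ) • Υ) (h0 : x ≠ 0) : 4 ≤ ⟪x, x⟫ := by
  obtain ⟨u, hu, rfl⟩ := (Submodule.mem_smul_pointwise_iff_exists _ _ _).1 hx
  obtain ⟨n, hn⟩ := hΥ u hu
  have hu0 : u ≠ 0 := by
    rintro rfl
    simp at h0
  have hp : 0 < ⟪u, u⟫ := real_inner_self_pos.2 hu0
  have h1 : 0 < n := by
    have : (0 : ℝ) < n := by linarith
    exact_mod_cast this
  have h2 : (1 : ℝ) ≤ n := by exact_mod_cast h1
  have h3 : (2 : ℤ) • u = u + u := two_zsmul u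
  rw [h3, inner_add_left, inner_add_right, hn]
  linarith

theorem core_zero {Υ M N : Submodule ℤ V} (hΥ : ∀ x ∈ Υ, ∃ n : ℤ, ⟪x, x⟫ = (n : ℝ))
    (hI : M ⊓ N = (2 : ℤ) • Υ) (hM : IsEvenLat M) {w x y z : V} (hw : w ∈ N) (hx : x ∈ M)
    (hy : y ∈ M) (hz : z ∈ M) (hs : x + y + z ∈ M ⊓ N) (h0 : w + z = 0)
    (hne : w + x ≠ 0 ∨ w + y ≠ 0) : 4 ≤ ⟪w + x, w + x⟫ + ⟪w + y, w + y⟫ := by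
  have hwz : w = -z := eq_neg_of_add_eq_zero_left h0
  have hwM : w ∈ M := by rw [hwz]; exact M.neg_mem hz
  have hwI : w ∈ M ⊓ N := ⟨hwM, hw⟩
  have hsum : (w + x) + (w + y) ∈ M ⊓ N := by
    have : (w + x) + (w + y) = (x + y + z) + (w + (w + w)) := by rw [hwz]; abel
    rw [this]
    exact (M ⊓ N).add_mem hs ((M ⊓ N).add_mem hwI ((M ⊓ N).add_mem hwI hwI))
  rw [hI] at hsum
  by_cases hp : w + x = 0
  · rw [hp, zero_add] at hsum
    have := two_smul_ge_four hΥ hsum (by tauto)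
    rw [hp]; simpa using this
  by_cases hq : w + y = 0
  · rw [hq, add_zero] at hsum
    have := two_smul_ge_four hΥ hsum (by tauto)
    rw [hq]; simpa using this
  have h1 := even_ge_two hM (M.add_mem hwM hx) hp
  have h2 := even_ge_two hM (M.add_mem hwM hy) hq
  linarith

theorem core {Υ M N : Submodule ℤ V} (hΥ : ∀ x ∈ Υ, ∃ n : ℤ, ⟪x, x⟫ = (n : ℝ))
    (hMΥ : M ≤ Υ) (hNΥ : N ≤ Υ)
    (hI : M ⊓ N = (2 : ℤ) • Υ) (hM : IsEvenLat M) (hN : IsEvenLat N) {w x y z : V}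
    (hw : w ∈ N) (hx : x ∈ M)
    (hy : y ∈ M) (hz : z ∈ M) (hs : x + y + z ∈ M ⊓ N)
    (hne : w + x ≠ 0 ∨ w + y ≠ 0 ∨ w + z ≠ 0) :
    4 ≤ ⟪w + x, w + x⟫ + ⟪w + y, w + y⟫ + ⟪w + z, w + z⟫ := by
  by_cases hz0 : w + z = 0
  · have := core_zero hΥ hI hM hw hx hy hz hs hz0 (by tauto)
    rw [hz0]; simpa using this
  by_cases hy0 : w + y = 0
  · have := core_zero hΥ hI hM hw hx hz hy (by rwa [add_right_comm]) hy0 (by tauto)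
    rw [hy0]; simpa using this
  by_cases hx0 : w + x = 0
  · have := core_zero hΥ hI hM hw hy hz hx (by rwa [add_comm, ← add_assoc]) hx0 (by tauto)
    rw [hx0]; simpa [add_assoc] using this
  obtain ⟨a, ha⟩ := hΥ _ (Υ.add_mem (hNΥ hw) (hMΥ hx))
  obtain ⟨b, hb⟩ := hΥ _ (Υ.add_mem (hNΥ hw) (hMΥ hy))
  obtain ⟨c, hc⟩ := hΥ _ (Υ.add_mem (hNΥ hw) (hMΥ hz))
  obtain ⟨m, hm⟩ := hN.2 w hw
  obtain ⟨p, hp⟩ := hM.2 x hx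
  obtain ⟨q, hq⟩ := hM.2 y hy
  obtain ⟨r, hr⟩ := hM.2 z hz
  obtain ⟨t, ht⟩ := hN.1 w hw _ hs.2
  have a0 : 0 < a := by
    have := real_inner_self_pos.2 hx0
    rw [ha] at this; exact_mod_cast this
  have b0 : 0 < b := by
    have := real_inner_self_pos.2 hy0
    rw [hb] at this; exact_mod_cast this
  have c0 : 0 < c := by
    have := real_inner_self_pos.2 hz0
    rw [hc] at this; exact_mod_cast this
  have key : (a : ℝ) + b + c = 3 * (2 * m) + 2 * p + 2 * q + 2 * r + 2 * t := by
    rw [← ha, ← hb, ← hc, ← ht]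
    simp only [inner_add_right, inner_add_left]
    linarith [real_inner_comm w x, real_inner_comm w y, real_inner_comm w z]
  have key' : a + b + c = 3 * (2 * m) + 2 * p + 2 * q + 2 * r + 2 * t := by exact_mod_cast key
  have : 4 ≤ a + b + c := by omega
  rw [ha, hb, hc]
  exact_mod_cast this

/-- for a polarization of `Υ` by Niemeier lattices `M, N`:
(i) `μ(L(M,N,3)) ≥ 4`; (ii) if `μ(M) = 2` then `μ(L(M,N,3)) = 4`. -/
theorem statement8 [FiniteDimensional ℝ V] (hdim : finrank ℝ V = 24)
    (Υ M N : Submodule ℤ V) (hΥlat : IsLat Υ) (hΥ : SqrtTwoEvenUnimod Υ)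
    (hpol : IsPolarization Υ M N)
    (hM : IsLat M ∧ IsEvenLat M ∧ IsUnimodularLat M)
    (hN : IsLat N ∧ IsEvenLat N ∧ IsUnimodularLat N) :
    4 ≤ minNorm (LMN M N 3) ∧ (minNorm M = 2 → minNorm (LMN M N 3) = 4) := by
  obtain ⟨hMΥ, hNΥ, -, -, -, hI⟩ := hpol
  obtain ⟨hΥ1, -, -⟩ := hΥ
  have hMe := hM.2.1
  have hNe := hN.2.1
  have hge : ∀ r ∈ {r : ℝ | ∃ x ∈ LMN M N 3, x ≠ 0 ∧ ⟪x, x⟫ = r}, 4 ≤ r := by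
    rintro r ⟨v, hv, hv0, rfl⟩
    obtain ⟨f, hf, g, ⟨w, hw, hg⟩, rfl⟩ := Submodule.mem_sup.1 hv
    have hs := hf.2
    rw [Fin.sum_univ_three] at hs
    have hc : ∀ i, (f + g) i = w + f i := fun i => by
      rw [PiLp.add_apply, hg i, add_comm]
    rw [PiLp.inner_apply, Fin.sum_univ_three, hc, hc, hc]
    refine core hΥ1 hMΥ hNΥ hI hMe hNe hw (hf.1 0) (hf.1 1) (hf.1 2) hs ?_
    by_contra! hcon
    apply hv0
    ext i
    rw [hc]
    fin_cases i
    · exact hcon.1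
    · exact hcon.2.1
    · exact hcon.2.2
  have hmem : ∀ v ∈ M, v ≠ 0 → (⟪v, v⟫ + ⟪v, v⟫) ∈
      {r : ℝ | ∃ x ∈ LMN M N 3, x ≠ 0 ∧ ⟪x, x⟫ = r} := by
    intro v hv hv0
    refine ⟨WithLp.toLp 2 ![v, -v, 0], Submodule.mem_sup_left ⟨?_, ?_⟩, ?_, ?_⟩
    · intro i
      fin_cases i
      · exact hv
      · exact M.neg_mem hv
      · exact M.zero_mem
    · rw [Fin.sum_univ_three]
      simp
    · intro h
      have := congrArg (fun u : PiLp 2 (fun _ : Fin 3 => V) => u 0) h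
      exact hv0 (by simpa using this)
    · rw [PiLp.inner_apply, Fin.sum_univ_three]
      simp
  have hex : ∃ v ∈ M, v ≠ 0 := by
    by_contra! h
    have h1 := hM.1.2
    have h2 : Submodule.span ℝ (M : Set V) = ⊥ := by
      rw [Submodule.span_eq_bot]; exact h
    rw [h2] at h1
    have := finrank_top ℝ V
    rw [← h1, finrank_bot, hdim] at this
    omega
  obtain ⟨v0, hv0M, hv00⟩ := hex
  have h4 : 4 ≤ minNorm (LMN M N 3) := le_csInf ⟨_, hmem v0 hv0M hv00⟩ hge
  refine ⟨h4, fun h2 => le_antisymm ?_ h4⟩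
  have hlt : sInf {r : ℝ | ∃ x ∈ M, x ≠ 0 ∧ ⟪x, x⟫ = r} < 4 := by
    have h3 : sInf {r : ℝ | ∃ x ∈ M, x ≠ 0 ∧ ⟪x, x⟫ = r} = 2 := h2
    rw [h3]; norm_num
  obtain ⟨r, ⟨v, hv, hvn, rfl⟩, hr⟩ := exists_lt_of_csInf_lt
    (s := {r : ℝ | ∃ x ∈ M, x ≠ 0 ∧ ⟪x, x⟫ = r}) ⟨_, v0, hv0M, hv00, rfl⟩ hlt
  obtain ⟨n, hn⟩ := hMe.2 v hv
  have hn2 : n < 2 := by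
    have : (n : ℝ) < 2 := by linarith
    exact_mod_cast this
  have hn1 : (n : ℝ) ≤ 1 := by exact_mod_cast (by omega : n ≤ 1)
  have hle : minNorm (LMN M N 3) ≤ ⟪v, v⟫ + ⟪v, v⟫ := csInf_le ⟨4, hge⟩ (hmem v hv hvn)
  linarith
end
end
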